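/- arXiv:2512.00652 — 2 statements merged into one kernel-verified Lean document; each statement's English description precedes it below -/
import Mathlib

section
/- The only rational point on the affine curve y² = −12x⁵ − 18x⁴ + 63x³ − 18x² − 12x is (0, 0). That is, for rational numbers x and y, if y² = −12x⁵ − 18x⁴ + 63x³ − 18x² − 12x then x = 0 and y = 0. -/
/-!
The quintic factors over `ℚ`: the equation is `y² = -3x(x² + 2x - 4)(4x² - 2x - 1)`, and it is
invariant under `x ↦ 1/x`. Each quadratic is a norm form from `ℚ(√5)`, in which 2 and 3 are inert.
Writing `x = a/b` in lowest terms, 3 divides `ab`, and by the symmetry one may take `b = 3c`. The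
resulting factors are coprime up to powers of 2 and 5, and local conditions at 2, 3 and 5 leave a
single two-cover: `a = ±u²`, `c = ∓v²`, with `a² + 2ab - 4b²` a square (`no_solution_three_dvd`). So
`u⁴ - 6u²v² - 36v⁴` is a square.

This last quartic is a 2-covering of the elliptic curve `Y² = X³ - 6X² - 36X`, which has rank 0,
and it has no primitive solution with `v ≠ 0` and `3 ∤ u`. That is proved by Fermat descent
(`descent`), composing the descents through a 2-isogeny (`first_step`) and its dual (`second_step`).
-/

/-! ### Descent on the quartic -/

/-- A coprime factorization of `n * r ^ 4` comes from factorizations of `n` and of `r`: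
`α = gcd(n, U)` and `β = gcd(n, V)` satisfy `αβ = n`, and then `U / α`, `V / β` are coprime with
product a fourth power. -/
lemma coprime_split (n : ℕ) (U V r : ℤ) (hc : IsCoprime U V) (hU : 0 < U) (hV : 0 < V)
    (h : U * V = n * r ^ 4) :
    ∃ (α β : ℕ) (A B : ℤ), α * β = n ∧ U = α * A ^ 4 ∧ V = β * B ^ 4 ∧ r = A * B := by
  lift U to ℕ using hU.le
  lift V to ℕ using hV.le
  rw [Nat.isCoprime_iff_coprime] at hc
  have hN : U * V = n * r.natAbs ^ 4 := by
    zify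
    rw [h, Even.pow_abs (by decide)]
  have hn : n ≠ 0 := by
    rintro rfl
    simp at h
    omega
  have hab : n.gcd U * n.gcd V = n := by
    rw [← Nat.Coprime.gcd_mul n hc, hN]; simp
  obtain ⟨u, hu⟩ := Nat.gcd_dvd_right n U
  obtain ⟨v, hv⟩ := Nat.gcd_dvd_right n V
  have huv : u * v = r.natAbs ^ 4 := by
    apply Nat.eq_of_mul_eq_mul_left (Nat.pos_of_ne_zero hn)
    rw [← hN]
    conv_rhs => rw [hu, hv]
    conv_lhs => rw [← hab]
    ring
  have hcuv : Nat.Coprime u v :=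
    Nat.Coprime.of_dvd (Dvd.intro_left _ hu.symm) (Dvd.intro_left _ hv.symm) hc
  obtain ⟨A, hA⟩ := exists_eq_pow_of_mul_eq_pow (by rw [Nat.isUnit_iff]; exact hcuv) huv
  obtain ⟨B, hB⟩ := exists_eq_pow_of_mul_eq_pow (by rw [Nat.isUnit_iff]; exact hcuv.symm)
    ((mul_comm v u).trans huv)
  have hr : r.natAbs = A * B := by
    rw [hA, hB, ← mul_pow] at huv
    exact (Nat.pow_left_injective (n := 4) (by norm_num) huv).symm
  have hU' : (U : ℤ) = (n.gcd U : ℕ) * (A : ℤ) ^ 4 := by rw [hA] at hu; exact_mod_cast hu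
  have hV' : (V : ℤ) = (n.gcd V : ℕ) * (B : ℤ) ^ 4 := by rw [hB] at hv; exact_mod_cast hv
  rcases Int.natAbs_eq r with h1 | h1
  · exact ⟨_, _, A, B, hab, hU', hV', by rw [h1, hr]; push_cast; ring⟩
  · exact ⟨_, _, -A, B, hab, by rw [hU']; ring, hV', by rw [h1, hr]; push_cast; ring⟩

lemma isCoprime_of_add_mul {U V : ℤ} (h : IsCoprime (U + V) (U * V)) : IsCoprime U V := by
  obtain ⟨x, y, hxy⟩ := h
  exact ⟨x + y * V, x, by linear_combination hxy⟩

lemma not_dvd_both {U V : ℤ} (h : IsCoprime U V) {q : ℤ} (hq : 1 < q) (hU : q ∣ U)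
    (hV : q ∣ V) : False := by
  have := h.isUnit_of_dvd' hU hV
  rw [Int.isUnit_iff] at this
  omega

lemma zmod8_sq_of_odd {t : ℤ} (ht : t % 2 = 1) : (t : ZMod 8) ^ 2 = 1 := by
  have : t ^ 2 % 8 = 1 % 8 := by
    have : t % 8 = 1 ∨ t % 8 = 3 ∨ t % 8 = 5 ∨ t % 8 = 7 := by omega
    rcases this with h | h | h | h <;> simp [pow_two, Int.mul_emod, h]
  have := (ZMod.intCast_eq_intCast_iff' _ _ 8).2 this
  exact_mod_cast this

lemma zmod3_sq {t : ℤ} (ht : ¬ 3 ∣ t) : (t : ZMod 3) ^ 2 = 1 := by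
  have h0 : (t : ZMod 3) ≠ 0 := by
    rwa [Ne, ZMod.intCast_zmod_eq_zero_iff_dvd t 3]
  revert h0
  generalize (t : ZMod 3) = x
  revert x
  decide

/-- Solutions of the quartic have `p` odd and `s` even, by congruences modulo 8. -/
lemma parity {p s z : ℤ} (hps : IsCoprime p s)
    (h : z ^ 2 = p ^ 4 - 6 * p ^ 2 * s ^ 2 - 36 * s ^ 4) : p % 2 = 1 ∧ s % 2 = 0 := by
  have hp2 : p % 2 = 1 := by
    by_contra hp
    obtain ⟨k, rfl⟩ : (2 : ℤ) ∣ p := by omega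
    have hs : s % 2 = 1 := by
      by_contra hs
      exact not_dvd_both hps one_lt_two (Dvd.intro k rfl) (by omega)
    have hz : (2 : ℤ) ∣ z := by
      apply Int.prime_two.dvd_of_dvd_pow (n := 2)
      rw [h]; exact ⟨8 * k ^ 4 - 12 * k ^ 2 * s ^ 2 - 18 * s ^ 4, by ring⟩
    obtain ⟨w, rfl⟩ := hz
    have hw : w ^ 2 = 4 * k ^ 4 - 6 * k ^ 2 * s ^ 2 - 9 * s ^ 4 := by linarith
    have hk : ∀ k w : ZMod 8, w ^ 2 ≠ 4 * k ^ 4 - 6 * k ^ 2 - 9 := by decide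
    apply hk k w
    have hw' := congrArg (Int.cast : ℤ → ZMod 8) hw
    push_cast at hw'
    rw [hw']
    linear_combination (-6 * (k : ZMod 8) ^ 2 - 9 * ((s : ZMod 8) ^ 2 + 1)) * zmod8_sq_of_odd hs
  refine ⟨hp2, ?_⟩
  by_contra hs
  have hk : ∀ z : ZMod 8, z ^ 2 ≠ 1 - 6 - 36 := by decide
  apply hk z
  have h' := congrArg (Int.cast : ℤ → ZMod 8) h
  push_cast at h'
  rw [h']
  linear_combination ((p : ZMod 8) ^ 2 + 1 - 6 * s ^ 2) * zmod8_sq_of_odd hp2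
    + (-6 - 36 * ((s : ZMod 8) ^ 2 + 1)) * zmod8_sq_of_odd (t := s) (by omega)

/-- The factorization step of `first_step`, with `U` the odd factor. Congruences modulo 3 and 8 and
coprimality exclude every splitting `180 = αβ` with `α` odd other than `1 * 180`. -/
lemma first_split {p r U V : ℤ} (hc : IsCoprime U V) (hU : 0 < U) (hV : 0 < V)
    (hUo : U % 2 = 1) (h3 : ¬ 3 ∣ p) (hmul : U * V = 180 * r ^ 4)
    (hadd : U + V = p ^ 2 - 12 * r ^ 2) (hp2 : p % 2 = 1) :
    ∃ A B : ℤ, r = A * B ∧ IsCoprime (A ^ 4) (180 * B ^ 4) ∧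
      p ^ 2 = A ^ 4 + 12 * A ^ 2 * B ^ 2 + 180 * B ^ 4 := by
  obtain ⟨α, β, A, B, hαβ, rfl, rfl, rfl⟩ :=
    coprime_split 180 U V r hc hU hV (by exact_mod_cast hmul)
  have hα : α ∈ Nat.divisors 180 := by
    rw [Nat.mem_divisors]; exact ⟨Dvd.intro _ hαβ, by norm_num⟩
  -- One bullet below for each odd `α`, in increasing order; `omega` discards the even ones.
  have hdiv : Nat.divisors 180 =
      {1, 2, 3, 4, 5, 6, 9, 10, 12, 15, 18, 20, 30, 36, 45, 60, 90, 180} := by rfl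
  have hαodd : α % 2 = 1 := by
    by_contra hα
    obtain ⟨k, rfl⟩ : 2 ∣ α := by omega
    push_cast at hUo
    rw [mul_assoc] at hUo
    omega
  have hp3 := zmod3_sq h3
  have hp8 := zmod8_sq_of_odd hp2
  have hE := congrArg (Int.cast : ℤ → ZMod 3) hadd
  have hE8 := congrArg (Int.cast : ℤ → ZMod 8) hadd
  push_cast at hE hE8
  rw [hp3] at hE
  rw [hp8] at hE8
  rw [hdiv] at hα
  simp only [Finset.mem_insert, Finset.mem_singleton] at hα
  have key3 : ∀ a b : ZMod 3, 5 * a ^ 4 + 36 * b ^ 4 ≠ 1 - 12 * (a * b) ^ 2 ∧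
    9 * a ^ 4 + 20 * b ^ 4 ≠ 1 - 12 * (a * b) ^ 2 := by decide
  have key8 : ∀ b : ZMod 8, 45 * 1 + 4 * b ^ 4 ≠ 1 - 12 * b ^ 2 := by decide
  rcases hα with rfl | rfl | rfl | rfl | rfl | rfl | rfl | rfl | rfl | rfl | rfl | rfl | rfl |
    rfl | rfl | rfl | rfl | rfl <;> try omega
  · obtain rfl : β = 180 := by omega
    refine ⟨A, B, rfl, ?_, ?_⟩
    · simpa using hc
    · push_cast at hadd
      linear_combination -hadd
  · obtain rfl : β = 60 := by omega
    exact (not_dvd_both hc (q := 3) (by norm_num) ⟨A ^ 4, by push_cast; ring⟩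
      ⟨20 * B ^ 4, by push_cast; ring⟩).elim
  · obtain rfl : β = 36 := by omega
    exact ((key3 A B).1 (by push_cast at hE; linear_combination hE)).elim
  · obtain rfl : β = 20 := by omega
    exact ((key3 A B).2 (by push_cast at hE; linear_combination hE)).elim
  · obtain rfl : β = 12 := by omega
    exact (not_dvd_both hc (q := 3) (by norm_num) ⟨5 * A ^ 4, by push_cast; ring⟩
      ⟨4 * B ^ 4, by push_cast; ring⟩).elim
  · obtain rfl : β = 4 := by omega
    have hA : A % 2 = 1 := by
      by_contra hA
      obtain ⟨k, rfl⟩ : 2 ∣ A := by omega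
      push_cast at hUo
      ring_nf at hUo
      omega
    have hA8 := zmod8_sq_of_odd hA
    refine (key8 B ?_).elim
    push_cast at hE8
    linear_combination hE8 - (45 * ((A : ZMod 8) ^ 2 + 1) + 12 * (B : ZMod 8) ^ 2) * hA8

/-- First 2-isogeny descent: the equation is `z² = (p² - 12r²)² - 720r⁴`, so with
`U, V = (p² - 12r² ± z) / 2` one has `UV = 180r⁴`, and `U`, `V` are coprime and positive. -/
lemma first_step {p r z : ℤ} (hr : r ≠ 0) (hpr : IsCoprime p r) (h3 : ¬ 3 ∣ p)
    (hp2 : p % 2 = 1) (h : z ^ 2 = p ^ 4 - 24 * p ^ 2 * r ^ 2 - 576 * r ^ 4) :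
    ∃ A B : ℤ, r = A * B ∧ IsCoprime (A ^ 4) (180 * B ^ 4) ∧
      p ^ 2 = A ^ 4 + 12 * A ^ 2 * B ^ 2 + 180 * B ^ 4 := by
  have hz2 : z % 2 = 1 := by
    have h1 : p ^ 4 % 2 = 1 := by
      have : Odd p := Int.odd_iff.2 hp2
      exact Int.odd_iff.1 this.pow
    have h2 : z ^ 2 % 2 = 1 := by
      rw [h]
      have : p ^ 4 - 24 * p ^ 2 * r ^ 2 - 576 * r ^ 4
        = p ^ 4 + 2 * (-12 * p ^ 2 * r ^ 2 - 288 * r ^ 4) := by ring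
      omega
    by_contra hz
    obtain ⟨k, rfl⟩ : 2 ∣ z := by omega
    ring_nf at h2
    omega
  have hpp : p ^ 2 % 2 = 1 := Int.odd_iff.1 (Int.odd_iff.2 hp2).pow
  obtain ⟨U, hU⟩ : ∃ U, p ^ 2 - 12 * r ^ 2 + z = 2 * U := ⟨(p ^ 2 - 12 * r ^ 2 + z) / 2, by omega⟩
  obtain ⟨V, hV⟩ : ∃ V, p ^ 2 - 12 * r ^ 2 - z = 2 * V := ⟨(p ^ 2 - 12 * r ^ 2 - z) / 2, by omega⟩
  have hadd : U + V = p ^ 2 - 12 * r ^ 2 := by linarith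
  have hmul : U * V = 180 * r ^ 4 := by
    have : (2 * U) * (2 * V) = 720 * r ^ 4 := by
      rw [← hU, ← hV]; linear_combination -h
    linarith
  have hr2 : 0 < r ^ 2 := by positivity
  have hr4 : 0 < r ^ 4 := by positivity
  have hmp : 0 < U * V := by rw [hmul]; positivity
  -- Otherwise `-12r² ≤ p² - 12r² ≤ 0`, so `(p² - 12r²)² ≤ 144r⁴ < 720r⁴`.
  have hsum : 0 < U + V := by
    by_contra hneg
    have h1 : (p ^ 2 - 12 * r ^ 2) ^ 2 = z ^ 2 + 720 * r ^ 4 := by linear_combination -h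
    nlinarith [sq_nonneg z, sq_nonneg p, mul_nonneg (sq_nonneg p) hr2.le]
  have hUpos : 0 < U := by
    by_contra hn
    rcases pos_and_pos_or_neg_and_neg_of_mul_pos hmp with ⟨a, b⟩ | ⟨a, b⟩ <;> linarith
  have hVpos : 0 < V := pos_of_mul_pos_right hmp hUpos.le
  have hc2 : IsCoprime (U + V) 2 := by
    rw [hadd]
    refine ⟨1, -((p ^ 2 - 12 * r ^ 2) / 2), ?_⟩
    omega
  have hc3 : IsCoprime (U + V) 3 := by
    rw [hadd]
    have : IsCoprime (p ^ 2) 3 := ((Int.prime_three.coprime_iff_not_dvd.2 h3).symm).pow_left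
    obtain ⟨x, y, hxy⟩ := this
    exact ⟨x, y + 4 * x * r ^ 2, by linear_combination hxy⟩
  have hc5 : IsCoprime (U + V) 5 := by
    rw [hadd]
    apply ((Int.prime_iff_natAbs_prime.2 (by norm_num) : Prime (5 : ℤ)).coprime_iff_not_dvd.2 _).symm
    intro hd
    have key : ∀ a b : ZMod 5, a ^ 2 - 12 * b ^ 2 = 0 → a = 0 ∧ b = 0 := by decide
    have hd' := (ZMod.intCast_zmod_eq_zero_iff_dvd _ 5).2 hd
    push_cast at hd'
    obtain ⟨ha, hb⟩ := key _ _ hd'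
    exact not_dvd_both hpr (q := 5) (by norm_num) ((ZMod.intCast_zmod_eq_zero_iff_dvd _ 5).1 ha)
      ((ZMod.intCast_zmod_eq_zero_iff_dvd _ 5).1 hb)
  have hcr : IsCoprime (U + V) r := by
    rw [hadd]
    obtain ⟨x, y, hxy⟩ := hpr.pow_left (m := 2)
    exact ⟨x, y + 12 * x * r, by linear_combination hxy⟩
  have hc : IsCoprime U V := by
    apply isCoprime_of_add_mul
    rw [hmul, show (180 : ℤ) = 2 ^ 2 * 3 ^ 2 * 5 by norm_num]
    exact ((hc2.pow_right.mul_right hc3.pow_right).mul_right hc5).mul_right hcr.pow_right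
  rcases Int.emod_two_eq_zero_or_one U with h0 | h1
  · exact first_split hc.symm hVpos hUpos (by omega) h3 (by linarith) (by linarith) hp2
  · exact first_split hc hUpos hVpos h1 h3 hmul hadd hp2

/-- Second (dual) 2-isogeny descent: the equation is `p² = (A² + 6B²)² + 144B⁴`, so with
`U, V = (p ± (A² + 6B²)) / 2` one has `UV = 36B⁴`, and `U`, `V` are coprime. The surviving splitting
`36 = 1 * 36` gives the quartic that the descent started from. -/
lemma second_step {A B p : ℤ} (hB : B ≠ 0) (hAB : IsCoprime (A ^ 4) (180 * B ^ 4))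
    (h : p ^ 2 = A ^ 4 + 12 * A ^ 2 * B ^ 2 + 180 * B ^ 4) :
    ∃ C D : ℤ, B = C * D ∧ IsCoprime (C ^ 4) (36 * D ^ 4) ∧
      A ^ 2 = C ^ 4 - 6 * C ^ 2 * D ^ 2 - 36 * D ^ 4 := by
  wlog hp : 0 ≤ p generalizing p
  · exact this (p := -p) (by rw [neg_sq, h]) (by linarith)
  have hA : IsCoprime A (180 * B ^ 4) := (IsCoprime.pow_left_iff (by norm_num)).1 hAB
  have hA2 : A % 2 = 1 := by
    by_contra hA2
    exact not_dvd_both hA one_lt_two (by omega) ⟨90 * B ^ 4, by ring⟩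
  have hA3 : ¬ 3 ∣ A := fun hd =>
    not_dvd_both hA (by norm_num) hd ⟨60 * B ^ 4, by ring⟩
  have hA36 : IsCoprime (A ^ 2) (6 * B) :=
    (hA.of_isCoprime_of_dvd_right ⟨30 * B ^ 3, by ring⟩).pow_left
  have hAA : A ^ 2 % 2 = 1 := Int.odd_iff.1 (Int.odd_iff.2 hA2).pow
  have hpp : p % 2 = 1 := by
    have : p ^ 2 % 2 = 1 := by
      have e : p ^ 2 = (A ^ 2) ^ 2 + 2 * (6 * A ^ 2 * B ^ 2 + 90 * B ^ 4) := by
        linear_combination h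
      have := Int.odd_iff.1 ((Int.odd_iff.2 hAA).pow (n := 2))
      omega
    by_contra hp2
    obtain ⟨k, rfl⟩ : 2 ∣ p := by omega
    ring_nf at this
    omega
  obtain ⟨U, hU⟩ : ∃ U, p + (A ^ 2 + 6 * B ^ 2) = 2 * U :=
    ⟨(p + (A ^ 2 + 6 * B ^ 2)) / 2, by omega⟩
  obtain ⟨V, hV⟩ : ∃ V, p - (A ^ 2 + 6 * B ^ 2) = 2 * V :=
    ⟨(p - (A ^ 2 + 6 * B ^ 2)) / 2, by omega⟩
  have hsub : U - V = A ^ 2 + 6 * B ^ 2 := by linarith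
  have hmul : U * V = 36 * B ^ 4 := by
    have : (2 * U) * (2 * V) = 144 * B ^ 4 := by
      rw [← hU, ← hV]; linear_combination h
    linarith
  have hmp : 0 < U * V := by rw [hmul]; positivity
  have hUpos : 0 < U := by
    have : 0 < B ^ 2 := by positivity
    nlinarith [sq_nonneg A]
  have hVpos : 0 < V := pos_of_mul_pos_right hmp hUpos.le
  have hc : IsCoprime U V := by
    rw [← IsCoprime.neg_right_iff]
    apply isCoprime_of_add_mul
    rw [← sub_eq_add_neg, hsub, mul_neg, hmul, IsCoprime.neg_right_iff]
    have h1 : IsCoprime (A ^ 2 + 6 * B ^ 2) (6 * B) := by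
      obtain ⟨x, y, hxy⟩ := hA36
      exact ⟨x, y - x * B, by linear_combination hxy⟩
    exact (h1.pow_right (n := 4)).of_isCoprime_of_dvd_right ⟨36, by ring⟩
  obtain ⟨α, β, C, D, hαβ, rfl, rfl, rfl⟩ :=
    coprime_split 36 U V B hc hUpos hVpos (by exact_mod_cast hmul)
  have hα : α ∈ Nat.divisors 36 := by
    rw [Nat.mem_divisors]; exact ⟨Dvd.intro _ hαβ, by norm_num⟩
  rw [show Nat.divisors 36 = {1, 2, 3, 4, 6, 9, 12, 18, 36} by rfl] at hα
  simp only [Finset.mem_insert, Finset.mem_singleton] at hα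
  have hE3 := congrArg (Int.cast : ℤ → ZMod 3) hsub
  have hE8 := congrArg (Int.cast : ℤ → ZMod 8) hsub
  push_cast at hE3 hE8
  rw [zmod3_sq hA3] at hE3
  rw [zmod8_sq_of_odd hA2] at hE8
  have key3 : ∀ a b : ZMod 3, 9 * a ^ 4 - 4 * b ^ 4 ≠ 1 + 6 * (a * b) ^ 2 ∧
    36 * a ^ 4 - 1 * b ^ 4 ≠ 1 + 6 * (a * b) ^ 2 := by decide
  have key8 : ∀ a b : ZMod 8, 4 * a ^ 4 - 9 * b ^ 4 ≠ 1 + 6 * (a * b) ^ 2 := by decide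
  have even_case : (2 : ℤ) ∣ α * C ^ 4 → (2 : ℤ) ∣ β * D ^ 4 → False :=
    not_dvd_both hc one_lt_two
  have three_case : (3 : ℤ) ∣ α * C ^ 4 → (3 : ℤ) ∣ β * D ^ 4 → False :=
    not_dvd_both hc (by norm_num)
  rcases hα with rfl | rfl | rfl | rfl | rfl | rfl | rfl | rfl | rfl
  · obtain rfl : β = 36 := by omega
    refine ⟨C, D, rfl, by simpa using hc, ?_⟩
    push_cast at hsub
    linear_combination -hsub
  · obtain rfl : β = 18 := by omega
    push_cast at even_case; omega
  · obtain rfl : β = 12 := by omega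
    exact (three_case ⟨1 * C ^ 4, by push_cast; ring⟩ ⟨4 * D ^ 4, by push_cast; ring⟩).elim
  · obtain rfl : β = 9 := by omega
    exact (key8 C D (by push_cast at hE8; linear_combination hE8)).elim
  · obtain rfl : β = 6 := by omega
    exact (three_case ⟨2 * C ^ 4, by push_cast; ring⟩ ⟨2 * D ^ 4, by push_cast; ring⟩).elim
  · obtain rfl : β = 4 := by omega
    exact ((key3 C D).1 (by push_cast at hE3; linear_combination hE3)).elim
  · obtain rfl : β = 3 := by omega
    exact (three_case ⟨4 * C ^ 4, by push_cast; ring⟩ ⟨1 * D ^ 4, by push_cast; ring⟩).elim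
  · obtain rfl : β = 2 := by omega
    push_cast at even_case; omega
  · obtain rfl : β = 1 := by omega
    exact ((key3 C D).2 (by push_cast at hE3; linear_combination hE3)).elim

/-- The quartic `z² = p⁴ - 6p²r² - 36r⁴` has no primitive solutions with `r ≠ 0` and `3 ∤ p`:
from a solution `(p, r)` the two descent steps give `r = 2ACD` and a new solution `(C, D)` with
`0 < |D| < |r|`. -/
lemma descent (N : ℕ) : ∀ p r z : ℤ, r.natAbs = N → r ≠ 0 → IsCoprime p r → ¬ 3 ∣ p →
    z ^ 2 ≠ p ^ 4 - 6 * p ^ 2 * r ^ 2 - 36 * r ^ 4 := by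
  induction N using Nat.strong_induction_on with
  | _ N ih =>
  intro p s z hN hs0 hps h3 h
  obtain ⟨hp2, hs2⟩ := parity hps h
  obtain ⟨r, rfl⟩ : 2 ∣ s := by omega
  have hr : r ≠ 0 := by rintro rfl; simp at hs0
  obtain ⟨A, B, rfl, hAB, hp⟩ := first_step (z := z) hr hps.of_mul_right_right h3 hp2
    (by rw [h]; ring)
  obtain ⟨hA0, hB0⟩ := mul_ne_zero_iff.1 hr
  obtain ⟨C, D, rfl, hCD, hA⟩ := second_step hB0 hAB hp
  obtain ⟨hC0, hD0⟩ := mul_ne_zero_iff.1 hB0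
  refine ih D.natAbs ?_ C D A rfl hD0 ?_ ?_ hA
  · rw [← hN]
    have h1 := Int.natAbs_pos.2 hA0
    have h2 := Int.natAbs_pos.2 hC0
    have h4 := Int.natAbs_pos.2 hD0
    have h5 : (2 * (A * (C * D))).natAbs = 2 * (A.natAbs * C.natAbs) * D.natAbs := by
      simp only [Int.natAbs_mul]; simp; ring
    rw [h5]
    have := Nat.mul_pos h1 h2
    nlinarith
  · exact ((IsCoprime.pow_left_iff (by norm_num)).1
      ((IsCoprime.pow_right_iff (m := 4) (by norm_num)).1 hCD.of_mul_right_right))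
  · intro hd
    exact not_dvd_both hCD (q := 3) (by norm_num) (dvd_pow hd (by norm_num))
      ⟨12 * D ^ 4, by ring⟩

/-! ### Reduction to the quartic -/

/-- If `u` divides `m` modulo `Q` and `m` is coprime to `Q`, then so is `u`. -/
lemma isCoprime_of_eq_add {Q m k u v : ℤ} (h : IsCoprime Q m) (e : m = Q * k + u * v) :
    IsCoprime Q u := by
  obtain ⟨x, y, hxy⟩ := h
  exact ⟨x + y * k, y * v, by rw [e] at hxy; linear_combination hxy⟩

lemma odd_isCoprime_two {Q : ℤ} (h : Q % 2 = 1) : IsCoprime Q 2 :=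
  ⟨1, -(Q / 2), by omega⟩

/-- If `5 ∣ a + 3c` then 5 exactly divides both quadratic factors, and after division by 25 the
right-hand side is `2c⁶` modulo 5, where 2 is not a square. -/
lemma five_not_dvd {a c Y : ℤ} (hac : IsCoprime a c)
    (h : Y ^ 2 = -(a * c) * ((a ^ 2 + 6 * a * c - 36 * c ^ 2) *
      (4 * a ^ 2 - 6 * a * c - 9 * c ^ 2))) : ¬ 5 ∣ a + 3 * c := by
  rintro ⟨k, hk⟩
  obtain rfl : a = 5 * k - 3 * c := by linarith
  have hp5 : Prime (5 : ℤ) := Int.prime_iff_natAbs_prime.2 (by norm_num)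
  obtain ⟨X, rfl⟩ : 5 ∣ Y := by
    apply hp5.dvd_of_dvd_pow (n := 2)
    rw [h]
    exact ⟨-((5 * k - 3 * c) * c) * ((5 * k ^ 2 - 9 * c ^ 2) *
      (5 * (20 * k ^ 2 - 30 * k * c + 9 * c ^ 2))), by ring⟩
  have hX : X ^ 2 = (3 * c - 5 * k) * c * (5 * k ^ 2 - 9 * c ^ 2) *
      (20 * k ^ 2 - 30 * k * c + 9 * c ^ 2) := by linarith
  have key : ∀ X k c : ZMod 5, X ^ 2 = (3 * c - 5 * k) * c * (5 * k ^ 2 - 9 * c ^ 2) *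
      (20 * k ^ 2 - 30 * k * c + 9 * c ^ 2) → c = 0 := by decide
  have hX' := congrArg (Int.cast : ℤ → ZMod 5) hX
  push_cast at hX'
  have hc : (5 : ℤ) ∣ c := (ZMod.intCast_zmod_eq_zero_iff_dvd _ 5).1 (key _ _ _ hX')
  refine not_dvd_both hac (by norm_num) ?_ hc
  omega

/-- Each quadratic factor is an odd number times 1 or 4, since 2 is inert in `ℚ(√5)`. -/
lemma odd_part (a c : ℤ) (hac : IsCoprime a c) :
    ∃ P R e f : ℤ, a ^ 2 + 6 * a * c - 36 * c ^ 2 = e ^ 2 * P ∧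
      4 * a ^ 2 - 6 * a * c - 9 * c ^ 2 = f ^ 2 * R ∧ P % 2 = 1 ∧ R % 2 = 1 ∧
      (e = 1 ∨ e = 2) ∧ (f = 1 ∨ f = 2) := by
  rcases Int.emod_two_eq_zero_or_one a with ha | ha
  · have hc : c % 2 = 1 := by
      by_contra hc
      exact not_dvd_both hac one_lt_two (by omega) (by omega)
    obtain ⟨k, rfl⟩ : 2 ∣ a := by omega
    refine ⟨k ^ 2 + 3 * k * c - 9 * c ^ 2, _, 2, 1, by ring, (by rw [one_pow, one_mul]), ?_, ?_,
      by simp, by simp⟩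
    · rcases Int.emod_two_eq_zero_or_one k with hk | hk <;>
        simp [pow_two, Int.add_emod, Int.sub_emod, Int.mul_emod, hk, hc]
    · simp [pow_two, Int.sub_emod, Int.mul_emod, hc]
  rcases Int.emod_two_eq_zero_or_one c with hc | hc
  · obtain ⟨k, rfl⟩ : 2 ∣ c := by omega
    refine ⟨_, a ^ 2 - 3 * a * k - 9 * k ^ 2, 1, 2, (by rw [one_pow, one_mul]), by ring, ?_, ?_,
      by simp, by simp⟩
    · simp [pow_two, Int.add_emod, Int.sub_emod, Int.mul_emod, ha]
    · rcases Int.emod_two_eq_zero_or_one k with hk | hk <;>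
        simp [pow_two, Int.sub_emod, Int.mul_emod, hk, ha]
  · refine ⟨_, _, 1, 1, (by rw [one_pow, one_mul]), (by rw [one_pow, one_mul]), ?_, ?_,
      by simp, by simp⟩
    · simp [pow_two, Int.add_emod, Int.sub_emod, Int.mul_emod, ha]
    · simp [pow_two, Int.sub_emod, Int.mul_emod, ha, hc]

/-- The equation of `no_integer_solution` with `b = 3c`. The odd parts of the two quadratic factors
are coprime to everything else, hence are squares up to sign; both are 1 modulo 3 up to squares, so
the sign is `+`. Then `-ac` is a square, so `a = ±u²` and `c = ∓v²`, and the first factor gives a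
solution `(u, v)` of the quartic excluded by `descent`. -/
lemma no_solution_three_dvd {a c Y : ℤ} (ha3 : ¬ 3 ∣ a) (hac : IsCoprime a c) (hc0 : c ≠ 0)
    (h : Y ^ 2 = -(a * c) * ((a ^ 2 + 6 * a * c - 36 * c ^ 2) *
      (4 * a ^ 2 - 6 * a * c - 9 * c ^ 2))) : False := by
  have h5 := five_not_dvd hac h
  have ha0 : a ≠ 0 := by rintro rfl; simp at ha3
  obtain ⟨P, R, e, f, hP, hR, hPo, hRo, he, hf⟩ := odd_part a c hac
  have hsq := zmod3_sq ha3
  have h30 : (3 : ZMod 3) = 0 := by decide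
  have hP3 : (e : ZMod 3) ^ 2 * P = 1 := by
    have := congrArg (Int.cast : ℤ → ZMod 3) hP
    push_cast at this
    rw [← this, hsq]
    linear_combination (2 * a * c - 12 * c ^ 2 : ZMod 3) * h30
  have hR3 : (f : ZMod 3) ^ 2 * R = 1 := by
    have := congrArg (Int.cast : ℤ → ZMod 3) hR
    push_cast at this
    rw [← this, hsq]
    linear_combination (1 - 2 * a * c - 3 * c ^ 2 : ZMod 3) * h30
  have c3 : ∀ {e Q : ℤ}, (e : ZMod 3) ^ 2 * Q = 1 → IsCoprime Q 3 := by
    intro e Q hQ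
    refine (Int.prime_three.coprime_iff_not_dvd.2 fun hd => ?_).symm
    rw [(ZMod.intCast_zmod_eq_zero_iff_dvd Q 3).2 hd, mul_zero] at hQ
    exact absurd hQ (by decide)
  have hp5 : Prime (5 : ℤ) := Int.prime_iff_natAbs_prime.2 (by norm_num)
  have P2 : IsCoprime P 2 := odd_isCoprime_two hPo
  have R2 : IsCoprime R 2 := odd_isCoprime_two hRo
  have P3 : IsCoprime P 3 := c3 hP3
  have R3 : IsCoprime R 3 := c3 hR3
  have P5 : IsCoprime P 5 := by
    refine (hp5.coprime_iff_not_dvd.2 ?_).symm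
    rintro ⟨k, rfl⟩
    exact h5 (hp5.dvd_of_dvd_pow (n := 2) ⟨e ^ 2 * k + 9 * c ^ 2, by linear_combination hP⟩)
  have R5 : IsCoprime R 5 := by
    refine (hp5.coprime_iff_not_dvd.2 ?_).symm
    rintro ⟨k, rfl⟩
    exact h5 (hp5.dvd_of_dvd_pow (n := 2) ⟨a ^ 2 - f ^ 2 * k, by linear_combination -hR⟩)
  have Pc : IsCoprime P c := by
    have h1 : IsCoprime c (a ^ 2) := hac.symm.pow_right
    have : IsCoprime c P := isCoprime_of_eq_add (k := 36 * c - 6 * a) (v := e ^ 2) h1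
      (by linear_combination hP)
    exact this.symm
  have Rc : IsCoprime R c := by
    have h1 : IsCoprime R (2 ^ 2) := R2.pow_right
    obtain ⟨x, y, hxy⟩ : IsCoprime c (a ^ 2) := hac.symm.pow_right
    exact isCoprime_of_eq_add (k := y * f ^ 2) (v := 4 * x + y * (6 * a + 9 * c)) h1
      (by linear_combination -4 * hxy + y * hR)
  have Pa : IsCoprime P a :=
    isCoprime_of_eq_add (k := -e ^ 2) (v := a + 6 * c)
      (((P2.pow_right (n := 2)).mul_right (P3.pow_right (n := 2))).mul_right (Pc.pow_right (n := 2)))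
      (by linear_combination -hP)
  have Ra : IsCoprime R a :=
    isCoprime_of_eq_add (k := -f ^ 2) (v := 4 * a - 6 * c)
      ((R3.pow_right (n := 2)).mul_right (Rc.pow_right (n := 2)))
      (by linear_combination -hR)
  have Pd : IsCoprime P (2 * a - 9 * c) :=
    isCoprime_of_eq_add (k := 4 * e ^ 2) (v := -(2 * a + 21 * c))
      (((P3.pow_right (n := 2)).mul_right P5).mul_right (Pc.pow_right (n := 2)))
      (by linear_combination 4 * hP)
  have Rd : IsCoprime R (2 * a - 9 * c) :=
    isCoprime_of_eq_add (k := f ^ 2) (v := -(2 * a + 6 * c))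
      (((R3.pow_right (n := 2)).mul_right R5).mul_right (Rc.pow_right (n := 2)))
      (by linear_combination hR)
  -- `4(a² + 6ac - 36c²) - (4a² - 6ac - 9c²) = 15c(2a - 9c)`
  have PR : IsCoprime P R :=
    isCoprime_of_eq_add (k := 4 * e ^ 2) (v := -f ^ 2)
      (((P3.mul_right P5).mul_right Pc).mul_right Pd)
      (by linear_combination 4 * hP - hR)
  have Pe : IsCoprime P e := by rcases he with rfl | rfl; exacts [isCoprime_one_right, P2]
  have Pf : IsCoprime P f := by rcases hf with rfl | rfl; exacts [isCoprime_one_right, P2]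
  have Re : IsCoprime R e := by rcases he with rfl | rfl; exacts [isCoprime_one_right, R2]
  have Rf : IsCoprime R f := by rcases hf with rfl | rfl; exacts [isCoprime_one_right, R2]
  rw [hP, hR] at h
  have sgn : ∀ {e Q : ℤ}, (e : ZMod 3) ^ 2 * Q = 1 → (∃ z, Q = z ^ 2 ∨ Q = -z ^ 2) →
      ∃ z, Q = z ^ 2 := by
    rintro e Q hQ ⟨z, rfl | rfl⟩
    · exact ⟨z, rfl⟩
    · have : ∀ e z : ZMod 3, e ^ 2 * -z ^ 2 ≠ 1 := by decide
      exact absurd (by exact_mod_cast hQ) (this e z)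
  obtain ⟨z, rfl⟩ := sgn hP3 (Int.sq_of_isCoprime (c := Y)
    (b := (-(a * c)) * e ^ 2 * (f ^ 2 * R))
    (((Pa.mul_right Pc).neg_right.mul_right Pe.pow_right).mul_right
      (Pf.pow_right.mul_right PR)) (by rw [h]; ring))
  obtain ⟨w, rfl⟩ := sgn hR3 (Int.sq_of_isCoprime (c := Y)
    (b := (-(a * c)) * f ^ 2 * (e ^ 2 * z ^ 2))
    (((Ra.mul_right Rc).neg_right.mul_right Rf.pow_right).mul_right
      (Re.pow_right.mul_right PR.symm)) (by rw [h]; ring))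
  have hne : e * z * (f * w) ≠ 0 := by
    have he0 : e ≠ 0 := by omega
    have hf0 : f ≠ 0 := by omega
    have hz0 : z ≠ 0 := by rintro rfl; simp at hPo
    have hw0 : w ≠ 0 := by rintro rfl; simp at hRo
    positivity
  obtain ⟨t, rfl⟩ : e * z * (f * w) ∣ Y := by
    rw [← Int.pow_dvd_pow_iff (n := 2) (by norm_num), h]
    exact ⟨-(a * c), by ring⟩
  have ht : -(a * c) = t ^ 2 := by
    apply mul_left_cancel₀ (pow_ne_zero 2 hne)
    linear_combination -h
  have hneg : ∀ u v : ℤ, u ≠ 0 → v ≠ 0 → -(u ^ 2 * v ^ 2) ≠ t ^ 2 := by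
    intro u v hu hv hh
    have : 0 < u ^ 2 * v ^ 2 := by positivity
    nlinarith [sq_nonneg t]
  have fin : ∀ u v : ℤ, u ≠ 0 → v ≠ 0 → a ^ 2 = u ^ 4 → c ^ 2 = v ^ 4 →
      a * c = -(u ^ 2 * v ^ 2) → IsCoprime u v → (3 ∣ u → 3 ∣ a) → False := by
    intro u v hu hv h1 h2 h12 huv hd
    exact descent _ u v (e * z) rfl hv huv (fun hh => ha3 (hd hh))
      (by linear_combination -hP + h1 + 6 * h12 - 36 * h2)
  obtain ⟨u, hu⟩ := Int.sq_of_isCoprime (a := a) (b := -c) (c := t) hac.neg_right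
    (by rw [← ht]; ring)
  obtain ⟨v, hv⟩ := Int.sq_of_isCoprime (a := c) (b := -a) (c := t) hac.symm.neg_right
    (by rw [← ht]; ring)
  have hu0 : u ≠ 0 := by rintro rfl; simp at hu; exact ha0 hu
  have hv0 : v ≠ 0 := by rintro rfl; simp at hv; exact hc0 hv
  have hda : u ∣ a := by rcases hu with rfl | rfl; exacts [⟨u, by ring⟩, ⟨-u, by ring⟩]
  have hdc : v ∣ c := by rcases hv with rfl | rfl; exacts [⟨v, by ring⟩, ⟨-v, by ring⟩]
  have huv : IsCoprime u v :=
    (hac.of_isCoprime_of_dvd_left hda).of_isCoprime_of_dvd_right hdc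
  have hd3 : (3 : ℤ) ∣ u → 3 ∣ a := fun hh => hh.trans hda
  rcases hu with hu | hu <;> rcases hv with hv | hv
  · exact hneg u v hu0 hv0 (by rw [← ht, hu, hv])
  · exact fin u v hu0 hv0 (by rw [hu]; ring) (by rw [hv]; ring) (by rw [hu, hv]; ring) huv hd3
  · exact fin u v hu0 hv0 (by rw [hu]; ring) (by rw [hv]; ring) (by rw [hu, hv]; ring) huv hd3
  · exact hneg u v hu0 hv0 (by rw [← ht, hu, hv]; ring)

/-- The homogeneous form of the equation, with `x = a / b`. -/
lemma no_integer_solution {a b Y : ℤ} (ha : a ≠ 0) (hb : b ≠ 0) (hab : IsCoprime a b)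
    (h : Y ^ 2 = -3 * (a * b) * ((a ^ 2 + 2 * a * b - 4 * b ^ 2) *
      (4 * a ^ 2 - 2 * a * b - b ^ 2))) : False := by
  obtain ⟨X, rfl⟩ : 3 ∣ Y := by
    apply Int.prime_three.dvd_of_dvd_pow (n := 2)
    rw [h]
    exact ⟨-(a * b) * ((a ^ 2 + 2 * a * b - 4 * b ^ 2) * (4 * a ^ 2 - 2 * a * b - b ^ 2)), by ring⟩
  have h3 : (3 : ℤ) ∣ a ∨ 3 ∣ b := by
    have key : ∀ a b : ZMod 3, (a * b) * ((a ^ 2 + 2 * a * b - 4 * b ^ 2) *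
      (4 * a ^ 2 - 2 * a * b - b ^ 2)) = 0 → a = 0 ∨ b = 0 := by decide
    have h' : 3 * X ^ 2 = -((a * b) * ((a ^ 2 + 2 * a * b - 4 * b ^ 2) *
      (4 * a ^ 2 - 2 * a * b - b ^ 2))) := by linarith
    have h'' := congrArg (Int.cast : ℤ → ZMod 3) h'
    push_cast at h''
    rw [show (3 : ZMod 3) = 0 by decide, zero_mul, eq_comm, neg_eq_zero] at h''
    exact (key _ _ h'').imp (ZMod.intCast_zmod_eq_zero_iff_dvd _ 3).1
      (ZMod.intCast_zmod_eq_zero_iff_dvd _ 3).1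
  -- Exchanging `a` and `b`, that is, `x ↦ 1 / x`, is a symmetry of the equation.
  wlog hb3 : 3 ∣ b generalizing a b
  · exact this hb ha hab.symm (by rw [h]; ring) h3.symm (h3.resolve_right hb3)
  obtain ⟨c, rfl⟩ := hb3
  refine no_solution_three_dvd (a := a) (c := c) (Y := X) ?_ hab.of_mul_right_right
    (by rintro rfl; simp at hb) (by linarith)
  intro hd
  exact not_dvd_both hab (by norm_num) hd ⟨c, rfl⟩

theorem rational_points_of_genus_two_curve_two (x y : ℚ)
    (h : y ^ 2 = -12 * x ^ 5 - 18 * x ^ 4 + 63 * x ^ 3 - 18 * x ^ 2 - 12 * x) :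
    x = 0 ∧ y = 0 := by
  have hx : x = 0 := by
    by_contra hx
    have hd : (x.den : ℚ) ≠ 0 := by exact_mod_cast x.den_ne_zero
    have hxd : x * x.den = x.num := Rat.mul_den_eq_num x
    have hsq : IsSquare (((-3 * (x.num * x.den) * ((x.num ^ 2 + 2 * x.num * x.den - 4 * x.den ^ 2) *
      (4 * x.num ^ 2 - 2 * x.num * x.den - x.den ^ 2)) : ℤ)) : ℚ) := by
      refine ⟨y * x.den ^ 3, ?_⟩
      push_cast
      rw [← hxd]
      linear_combination -(x.den : ℚ) ^ 6 * h
    rw [Rat.isSquare_intCast_iff] at hsq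
    obtain ⟨Y, hY⟩ := hsq
    exact no_integer_solution (a := x.num) (b := x.den) (Y := Y) (Rat.num_ne_zero.2 hx) (by exact_mod_cast x.den_ne_zero)
      (Int.isCoprime_iff_nat_coprime.2 (by simpa using x.reduced)) (by rw [hY]; ring)
  subst hx
  exact ⟨rfl, by simpa using h⟩
end

section
/- The only rational points on the affine curve y² = x⁶ + 3x⁴ + 3x² + 9 are (1, 4), (1, −4), (−1, 4), (−1, −4), (0, 3), and (0, −3). That is, for rational numbers x and y, the equation y² = x⁶ + 3x⁴ + 3x² + 9 holds if and only if (x, y) is one of these six pairs. -/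
/-!
The right-hand side factors as `(x² + 3) (x⁴ + 3)`. Writing `x = p / q` in lowest terms turns the
equation into `(p² + 3q²) (p⁴ + 3q⁴) = Y²` in integers, and any common factor of the two factors
divides a power of `6`. Splitting off these primes (`sq_split`) leaves two coverings.

* If `3 ∣ p`, say `p = 3t`, then `q⁴ + 27t⁴` is a square. Fermat descent (`quartic`) excludes this
  unless `t = 0`, which gives `x = 0`.
* Otherwise `p² + 3q²` and `p⁴ + 3q⁴` are both squares. The second factors over the Eisenstein
  integers `ℤ[ω]` as `(p² + √-3 q²) (p² - √-3 q²)`, and `ℤ[ω]` is a principal ideal domain whose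
  units are squares up to sign. If `q` is even, `p² + √-3 q²` is a square, and `p² / q²` is the
  abscissa of a point of `y² = x (x + 3) (x + √-3)`. If `p` and `q` are odd, `p² + √-3 q²` is `-2`
  times a square, and `-2p² / q²` is the abscissa of a point of the twist
  `y² = x (x - 6) (x - 2√-3)` of that curve; `p² = q²` does occur here, through the points with
  abscissa `-2`, and one of these, with a sign chosen `2`-adically, is added in order to reach the
  neighbourhood of the origin.

In both subcases the result is a point `(A / B², C / B³)` over `ℤ[ω]` with `A` odd and `B` even and
nonzero, that is, a point in the kernel of reduction at the inert prime `2`. Such a point is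
divisible by two (`halve`): the square class of `A` is `±1` or `±√-3` (`sq_class`), congruences
modulo `4` leave only the trivial class, and the same holds for the other two factors. Halving
lowers the power of `2` in `B`. For the first curve this ends at a point with odd `B` that is
impossible modulo `8` (`curveA_base`, `curveA`). For the second, a congruence `B₀² ≡ ω A` modulo
`8` on the odd part `B₀` of `B` is preserved along the way; at odd `B`, adding the fixed point
`(-3ω², -3√-3)` gives a point of the kernel of reduction once more, and its half is impossible
modulo `2` (`curveB`). No Mordell-Weil group is needed.
-/

namespace GenusTwo

/-! ### The Eisenstein integers -/

/-- The Eisenstein integers `ℤ[ω]` with `ω² = -1 - ω`, written as pairs `re + im ω`. -/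
abbrev Eis := QuadraticAlgebra ℤ (-1) (-1)
/-- The quotient `ℤ[ω] / n`, finite with decidable equality for `n ≠ 0`. -/
abbrev EisMod (n : ℕ) := QuadraticAlgebra (ZMod n) (-1) (-1)

/-- The primitive cube root of unity `ω`. -/
def w : Eis := ⟨0, 1⟩

theorem w_sq : w ^ 2 = -1 - w := by
  rw [sq]; ext <;> simp [w, QuadraticAlgebra.re_one, QuadraticAlgebra.im_one]

theorem norm_eq (z : Eis) : QuadraticAlgebra.norm z = z.re ^ 2 - z.re * z.im + z.im ^ 2 := by
  rw [QuadraticAlgebra.norm_def]; ring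

theorem norm_nonneg (z : Eis) : 0 ≤ QuadraticAlgebra.norm z := by
  rw [norm_eq]; nlinarith [sq_nonneg (z.re - z.im), sq_nonneg z.re, sq_nonneg z.im]

theorem norm_eq_zero {z : Eis} (h : QuadraticAlgebra.norm z = 0) : z = 0 := by
  rw [norm_eq] at h
  have h1 : z.im = 0 := by nlinarith [sq_nonneg (2 * z.re - z.im), sq_nonneg z.im]
  have h2 : z.re = 0 := by nlinarith [sq_nonneg (2 * z.im - z.re), sq_nonneg z.re]
  ext <;> simpa

instance : IsDomain Eis :=
  have : NoZeroDivisors Eis := ⟨fun {a b} h => by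
    have h' : QuadraticAlgebra.norm a * QuadraticAlgebra.norm b = 0 := by
      rw [← map_mul, h, QuadraticAlgebra.norm_zero]
    exact (mul_eq_zero.mp h').imp norm_eq_zero norm_eq_zero⟩
  NoZeroDivisors.to_isDomain _

/-- Division with remainder: rounding both coordinates of `x / y` leaves an error of norm at most
`3/4`. -/
theorem exists_quot (x y : Eis) (hy : y ≠ 0) :
    ∃ q : Eis, QuadraticAlgebra.norm (x - y * q) < QuadraticAlgebra.norm y := by
  set n := QuadraticAlgebra.norm y with hn
  have hn0 : 0 < n := lt_of_le_of_ne (norm_nonneg y) fun h => hy (norm_eq_zero h.symm)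
  have key : ∀ t : ℤ, ∃ r : ℤ, |2 * (t - n * r)| ≤ n := fun t => by
    refine ⟨(2 * t + n) / (2 * n), ?_⟩
    have h1 := Int.emod_add_mul_ediv (2 * t + n) (2 * n)
    have h2 := Int.emod_nonneg (2 * t + n) (by omega : 2 * n ≠ 0)
    have h3 := Int.emod_lt_of_pos (2 * t + n) (by omega : 0 < 2 * n)
    rw [abs_le]; constructor <;> nlinarith
  obtain ⟨r, hr⟩ := key (x * star y).re
  obtain ⟨s, hs⟩ := key (x * star y).im
  refine ⟨⟨r, s⟩, ?_⟩
  set z : Eis := x - y * ⟨r, s⟩ with hz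
  have e1 : z * star y = ⟨(x * star y).re - n * r, (x * star y).im - n * s⟩ := by
    have : z * star y = x * star y - (y * star y) * ⟨r, s⟩ := by rw [hz]; ring
    rw [this, ← QuadraticAlgebra.algebraMap_norm_eq_mul_star, ← hn]
    ext <;> simp
  have e2 : QuadraticAlgebra.norm z * n = QuadraticAlgebra.norm (z * star y) := by
    rw [map_mul, QuadraticAlgebra.norm_star]
  rw [e1] at e2
  set u := (x * star y).re - n * r
  set v := (x * star y).im - n * s
  have e3 : QuadraticAlgebra.norm (⟨u, v⟩ : Eis) = u ^ 2 - u * v + v ^ 2 := norm_eq _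
  rw [e3] at e2
  have hu := abs_le.mp hr
  have hv := abs_le.mp hs
  have hb : 4 * (u ^ 2 - u * v + v ^ 2) ≤ 3 * n ^ 2 := by
    nlinarith [mul_nonneg (by linarith : 0 ≤ n - 2 * u) (by linarith : 0 ≤ n + 2 * u),
      mul_nonneg (by linarith : 0 ≤ n - 2 * v) (by linarith : 0 ≤ n + 2 * v),
      mul_nonneg (by linarith : 0 ≤ n - 2 * u) (by linarith : 0 ≤ n - 2 * v),
      mul_nonneg (by linarith : 0 ≤ n + 2 * u) (by linarith : 0 ≤ n + 2 * v)]
  refine lt_of_mul_lt_mul_right (a := n) ?_ hn0.le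
  rw [e2]
  nlinarith [mul_pos hn0 hn0]

instance : IsPrincipalIdealRing Eis := by
  classical
  choose q hq using exists_quot
  let _ : EuclideanDomain Eis :=
    { (inferInstance : CommRing Eis), (inferInstance : Nontrivial Eis) with
      quotient := fun x y => if hy : y = 0 then 0 else q x y hy
      remainder := fun x y => if hy : y = 0 then x else x - y * q x y hy
      quotient_zero := by intro a; simp
      quotient_mul_add_remainder_eq := by
        intro a b; by_cases hb : b = 0 <;> simp [hb]
      r := fun a b => (QuadraticAlgebra.norm a).natAbs < (QuadraticAlgebra.norm b).natAbs
      r_wellFounded := (measure fun z : Eis => (QuadraticAlgebra.norm z).natAbs).wf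
      remainder_lt := by
        intro a b hb
        have h1 := hq a b hb
        have h2 := norm_nonneg (a - b * q a b hb)
        simp only [hb, dif_neg, not_false_eq_true]
        omega
      mul_left_not_lt := by
        intro a b hb
        have h1 : QuadraticAlgebra.norm b ≠ 0 := fun h => hb (norm_eq_zero h)
        rw [map_mul, Int.natAbs_mul, not_lt]
        exact Nat.le_mul_of_pos_right _ (by omega) }
  exact EuclideanDomain.to_principal_ideal_domain

/-- Reduction modulo `n`. -/
def red (n : ℕ) : Eis →+* EisMod n where
  toFun z := ⟨z.re, z.im⟩
  map_one' := by ext <;> simp [QuadraticAlgebra.re_one, QuadraticAlgebra.im_one]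
  map_zero' := by ext <;> simp
  map_add' x y := by ext <;> simp
  map_mul' x y := by ext <;> simp

theorem red_eq_zero {n : ℕ} {z : Eis} : red n z = 0 ↔ (n : Eis) ∣ z := by
  constructor
  · intro h
    have h1 : ((z.re : ℤ) : ZMod n) = 0 := congrArg QuadraticAlgebra.re h
    have h2 : ((z.im : ℤ) : ZMod n) = 0 := congrArg QuadraticAlgebra.im h
    rw [ZMod.intCast_zmod_eq_zero_iff_dvd] at h1 h2
    obtain ⟨a, ha⟩ := h1
    obtain ⟨b, hb⟩ := h2
    exact ⟨⟨a, b⟩, by ext <;> simp [ha, hb]⟩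
  · rintro ⟨_, rfl⟩
    rw [map_mul, map_natCast]
    have : ((n : ℕ) : EisMod n) = 0 := by ext <;> simp
    rw [this, zero_mul]

theorem red_eq_iff {n : ℕ} {x y : Eis} : red n x = red n y ↔ (n : Eis) ∣ x - y := by
  rw [← red_eq_zero, map_sub, sub_eq_zero]

instance (n : ℕ) [NeZero n] : Fintype (EisMod n) :=
  Fintype.ofEquiv _ (QuadraticAlgebra.equivProd (-1) (-1)).symm

/-! ### Units, square roots of `-3`, and square classes of points -/

open QuadraticAlgebra in
theorem isUnit_iff {u : Eis} : IsUnit u ↔ norm u = 1 := by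
  rw [isUnit_iff_norm_isUnit, Int.isUnit_iff]
  have := norm_nonneg u
  omega

/-- Every unit of `ℤ[ω]` is a square up to sign, because `ω = (ω²)²`. -/
theorem unit_sq {u : Eis} (h : IsUnit u) : ∃ v, u = v ^ 2 ∨ u = -v ^ 2 := by
  rw [isUnit_iff, norm_eq] at h
  obtain ⟨a, b⟩ := u
  simp only at h
  have ha : -1 ≤ a ∧ a ≤ 1 := by constructor <;> nlinarith [sq_nonneg (2 * b - a), sq_nonneg a]
  have hb : -1 ≤ b ∧ b ≤ 1 := by constructor <;> nlinarith [sq_nonneg (2 * a - b), sq_nonneg b]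
  obtain ⟨ha1, ha2⟩ := ha
  obtain ⟨hb1, hb2⟩ := hb
  have : (∃ v ∈ [(1 : Eis), w, w ^ 2], (⟨a, b⟩ : Eis) = v ^ 2 ∨ (⟨a, b⟩ : Eis) = -v ^ 2) := by
    interval_cases a <;> interval_cases b <;> first | omega | decide
  obtain ⟨v, -, hv⟩ := this
  exact ⟨v, hv⟩

/-- The square root `1 + 2ω` of `-3`. -/
def th : Eis := 1 + 2 * w

theorem th_sq : th ^ 2 = -3 := by
  have := w_sq; unfold th; linear_combination 4 * this

theorem irreducible_th : Irreducible th := by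
  refine ⟨by rw [isUnit_iff]; decide, fun a b h => ?_⟩
  rw [isUnit_iff, isUnit_iff]
  have h1 : QuadraticAlgebra.norm a * QuadraticAlgebra.norm b = 3 := by
    rw [← map_mul, ← h]; decide
  have ha := norm_nonneg a
  have hd : QuadraticAlgebra.norm a ≤ 3 := by
    have : QuadraticAlgebra.norm a ∣ 3 := ⟨_, h1.symm⟩
    exact Int.le_of_dvd (by norm_num) this
  generalize QuadraticAlgebra.norm a = m at *
  interval_cases m <;> omega

/-- The prime `2` is inert in `ℤ[ω]`. -/
theorem irreducible_two : Irreducible (2 : Eis) := by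
  refine ⟨by rw [isUnit_iff]; decide, fun a b h => ?_⟩
  rw [isUnit_iff, isUnit_iff]
  have h1 : QuadraticAlgebra.norm a * QuadraticAlgebra.norm b = 4 := by
    rw [← map_mul, ← h]; decide
  have ha := norm_nonneg a
  have hd : QuadraticAlgebra.norm a ≤ 4 := by
    have : QuadraticAlgebra.norm a ∣ 4 := ⟨_, h1.symm⟩
    exact Int.le_of_dvd (by norm_num) this
  -- `2` is inert: it is not a norm
  have h2 : QuadraticAlgebra.norm a ≠ 2 := by
    intro h2
    rw [norm_eq] at h2
    have hb : -1 ≤ a.im ∧ a.im ≤ 1 := by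
      constructor <;> nlinarith [sq_nonneg (2 * a.re - a.im)]
    have hc : -1 ≤ a.re ∧ a.re ≤ 1 := by
      constructor <;> nlinarith [sq_nonneg (2 * a.im - a.re)]
    generalize a.re = x at *
    generalize a.im = y at *
    obtain ⟨hb1, hb2⟩ := hb
    obtain ⟨hc1, hc2⟩ := hc
    interval_cases x <;> interval_cases y <;> omega
  generalize QuadraticAlgebra.norm a = m at *
  interval_cases m <;> omega

/-- An element prime to `2` and `√-3` is prime to every divisor of `12`. -/
theorem coprime_dvd_twelve {n e : Eis} (h2 : ¬ 2 ∣ n) (h3 : ¬ th ∣ n) (he : e ∣ 12) :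
    IsCoprime n e := by
  have c2 := (irreducible_two.coprime_iff_not_dvd.mpr h2).symm
  have c3 := (irreducible_th.coprime_iff_not_dvd.mpr h3).symm
  have c12 : IsCoprime n (2 ^ 2 * -th ^ 2) := (c2.pow_right).mul_right (c3.pow_right.neg_right)
  rw [th_sq] at c12
  norm_num at c12
  exact c12.of_isCoprime_of_dvd_right he

/-- A square class occurring in the descent: `±1` or `±√-3`. -/
def Cls (A : Eis) : Prop := ∃ s, A = s ^ 2 ∨ A = -s ^ 2 ∨ A = th * s ^ 2 ∨ A = -(th * s ^ 2)

/-- For a point `(A / B², C / B³)` of `y² = x (x + e) (x + f)` with `e` and `f` dividing `12` and `A`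
odd, `A` is a unit times a power of `√-3` times a square. Here `A` and `B` need not be coprime:
`A / B²` is put in lowest terms `n / d`, and `d` is then prime to `n (n + e d) (n + f d)`. -/
theorem sq_class {A B C e f : Eis} (hA : ¬ 2 ∣ A) (hB : B ≠ 0) (he : e ∣ 12) (hf : f ∣ 12)
    (h : C ^ 2 = A * (A + e * B ^ 2) * (A + f * B ^ 2)) : Cls A := by
  obtain ⟨n, d, g, hrel, rfl, hd⟩ :=
    UniqueFactorizationMonoid.exists_reduced_factors' A (B ^ 2) (pow_ne_zero 2 hB)
  have hnd : IsCoprime n d := hrel.isCoprime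
  have hn2 : ¬ 2 ∣ n := fun h => hA (h.mul_left g)
  have hg0 : g ≠ 0 := by rintro rfl; rw [zero_mul] at hd; exact pow_ne_zero 2 hB hd.symm
  have hd0 : d ≠ 0 := by rintro rfl; rw [mul_zero] at hd; exact pow_ne_zero 2 hB hd.symm
  have hn0 : n ≠ 0 := by rintro rfl; exact hn2 (dvd_zero 2)
  have hsq : (B * C) ^ 2 = (g ^ 2) ^ 2 * (d * (n * (n + e * d) * (n + f * d))) := by
    rw [mul_pow, h, ← hd]; ring
  have hdv : g ^ 2 ∣ B * C := (IsIntegrallyClosed.pow_dvd_pow_iff two_ne_zero).mp ⟨_, hsq⟩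
  obtain ⟨m, hm⟩ := hdv
  have hm2 : d * (n * (n + e * d) * (n + f * d)) = m ^ 2 := by
    rw [hm, mul_pow] at hsq
    exact (mul_left_cancel₀ (pow_ne_zero 2 (pow_ne_zero 2 hg0)) hsq).symm
  have hcop : IsCoprime d (n * (n + e * d) * (n + f * d)) := by
    refine ((hnd.symm).mul_right ?_).mul_right ?_
    · exact (IsCoprime.add_mul_right_right_iff (z := e)).mpr hnd.symm
    · exact (IsCoprime.add_mul_right_right_iff (z := f)).mpr hnd.symm
  -- the denominator is a square up to a unit, hence so is the common factor
  obtain ⟨r, u, hu⟩ := exists_associated_pow_of_mul_eq_pow' hcop hm2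
  have hrB : r ∣ B := by
    refine (IsIntegrallyClosed.pow_dvd_pow_iff two_ne_zero).mp ⟨g * u, ?_⟩
    rw [← hd, ← hu]; ring
  obtain ⟨h', hh'⟩ := hrB
  have hr0 : r ≠ 0 := by rintro rfl; exact hB (by rw [hh', zero_mul])
  have hgu : h' ^ 2 = g * u := by
    apply mul_left_cancel₀ (pow_ne_zero 2 hr0)
    rw [← mul_pow, ← hh', ← hd, ← hu]; ring
  obtain ⟨n0, hk3, hkn⟩ :=
    (FiniteMultiplicity.of_not_isUnit irreducible_th.not_isUnit hn0).exists_eq_pow_mul_and_not_dvd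
  generalize multiplicity th n = k at hk3
  have hn02 : ¬ 2 ∣ n0 := fun h => hn2 (by rw [hk3]; exact h.mul_left _)
  have hn0d : IsCoprime n0 d := hnd.of_isCoprime_of_dvd_left ⟨th ^ k, by rw [hk3]; ring⟩
  have key : ∀ e, e ∣ 12 → IsCoprime n0 (n + e * d) := fun e he => by
    have h1 : IsCoprime n0 (e * d) := (coprime_dvd_twelve hn02 hkn he).mul_right hn0d
    rw [hk3, add_comm]
    exact h1.add_mul_right_right _
  have hcop' : IsCoprime n0 (th ^ k * d * (n + e * d) * (n + f * d)) := by
    refine ((IsCoprime.mul_right ?_ hn0d).mul_right (key e he)).mul_right (key f hf)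
    exact ((irreducible_th.coprime_iff_not_dvd.mpr hkn).symm).pow_right
  obtain ⟨s, v, hv⟩ := exists_associated_pow_of_mul_eq_pow' hcop' (c := m) (k := 2) (by
    rw [← hm2]; nth_rewrite 3 [hk3]; ring)
  obtain ⟨x, hx⟩ := unit_sq (u := ((u⁻¹ * v : Eisˣ) : Eis)) (Units.isUnit _)
  have hA' : g * n = ((u⁻¹ * v : Eisˣ) : Eis) * (h' * s) ^ 2 * th ^ k := by
    rw [Units.val_mul, mul_pow, hgu, hk3, ← hv]
    linear_combination (-(th ^ k * s ^ 2 * v * g)) * u.inv_mul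
  rw [hA']
  obtain ⟨j, hj | hj⟩ := Nat.even_or_odd' k
  · refine ⟨x * h' * s * th ^ j, ?_⟩
    rw [hj]
    rcases hx with hx | hx <;> rw [hx]
    · left; ring
    · right; left; ring
  · refine ⟨x * h' * s * th ^ j, ?_⟩
    rw [hj]
    rcases hx with hx | hx <;> rw [hx]
    · right; right; left; ring
    · right; right; right; ring

/-! ### Division by two, and the curve `y² = x (x + 3) (x + √-3)` -/

theorem red_w (n : ℕ) : red n w = ⟨0, 1⟩ := by ext <;> simp [red, w]

@[simp] theorem red_ofNat (n k : ℕ) [k.AtLeastTwo] :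
    red n (no_index (OfNat.ofNat k)) = OfNat.ofNat k := map_ofNat (red n) k

/-- Divisibility by `2` is tested in `ℤ[ω] / 2`, so that parity arguments become finite checks. -/
theorem odd_iff {z : Eis} : ¬ 2 ∣ z ↔ red 2 z ≠ 0 := by
  rw [Ne, red_eq_zero]; norm_num

/-- Multiplication by `4` expresses residues modulo `2` inside `ℤ[ω] / 8`. -/
theorem red_eight {x y : Eis} (h : red 2 x = red 2 y) : 4 * red 8 x = 4 * red 8 y := by
  rw [red_eq_iff] at h
  have : red 8 (4 * x) = red 8 (4 * y) := by
    rw [red_eq_iff, ← mul_sub]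
    obtain ⟨t, ht⟩ := h
    exact ⟨t, by rw [ht]; push_cast; ring⟩
  simpa using this

theorem odd_four {z : Eis} (h : ¬ 2 ∣ z) : 2 * red 4 z ≠ 0 := by
  intro h'
  have : red 4 (2 * z) = 0 := by simpa using h'
  rw [red_eq_zero] at this
  obtain ⟨t, ht⟩ := this
  refine h ⟨t, mul_left_cancel₀ ((by decide : (2 : Eis) ≠ 0)) ?_⟩
  rw [ht]; push_cast; ring

theorem odd_eight {z : Eis} (h : ¬ 2 ∣ z) : 4 * red 8 z ≠ 0 := by
  intro h'
  have : red 8 (4 * z) = 0 := by simpa using h'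
  rw [red_eq_zero] at this
  obtain ⟨t, ht⟩ := this
  refine h ⟨t, mul_left_cancel₀ ((by decide : (4 : Eis) ≠ 0)) ?_⟩
  rw [ht]; push_cast; ring

/-- The classes `-1` and `±√-3` are incompatible with `C² = A³` modulo `4`; `2 x ≠ 0` says that `x`
is odd, and `⟨0, 1⟩` is `ω`. -/
theorem dec_cls : ∀ s C : EisMod 4,
    (2 * (-s ^ 2) ≠ 0 → C ^ 2 ≠ (-s ^ 2) ^ 3) ∧
    (2 * ((1 + 2 * ⟨0, 1⟩) * s ^ 2) ≠ 0 → C ^ 2 ≠ ((1 + 2 * ⟨0, 1⟩) * s ^ 2) ^ 3) ∧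
    (2 * (-((1 + 2 * ⟨0, 1⟩) * s ^ 2)) ≠ 0 → C ^ 2 ≠ (-((1 + 2 * ⟨0, 1⟩) * s ^ 2)) ^ 3) := by
  decide +kernel

/-- Modulo `4`, the square classes `-1` and `±√-3` are excluded. -/
theorem sq_of_cls {A C : Eis} (hc : Cls A) (hA : ¬ 2 ∣ A) (h : red 4 (C ^ 2) = red 4 (A ^ 3)) :
    ∃ s, A = s ^ 2 := by
  have h2 := odd_four hA
  obtain ⟨s, hs⟩ := hc
  have hd := dec_cls (red 4 s) (red 4 C)
  rcases hs with hs | hs | hs | hs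
  · exact ⟨s, hs⟩
  · rw [hs] at h h2
    simp only [map_pow, map_neg] at h h2
    exact absurd h (hd.1 h2)
  · rw [hs] at h h2
    simp only [map_pow, map_mul, th, map_add, map_one, red_ofNat, red_w] at h h2
    exact absurd h (hd.2.1 h2)
  · rw [hs] at h h2
    simp only [map_pow, map_neg, map_mul, th, map_add, map_one, red_ofNat, red_w] at h h2
    exact absurd h (hd.2.2 h2)

/-- Squares congruent modulo `4` have roots congruent modulo `2`. -/
theorem exists_half {a b m : Eis} (h : b ^ 2 = a ^ 2 + 4 * m) :
    ∃ z, b = a + 2 * z ∧ z ^ 2 + a * z = m := by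
  have h2 : (2 : Eis) ∣ (b - a) ^ 2 := ⟨2 * m - a * b + a ^ 2, by linear_combination h⟩
  obtain ⟨z, hz⟩ := irreducible_two.prime.dvd_of_dvd_pow h2
  refine ⟨z, by linear_combination hz, ?_⟩
  have h4 : (4 : Eis) ≠ 0 := by decide
  apply mul_left_cancel₀ h4
  linear_combination h - (b + a + 2 * z) * hz

theorem dec_A1 : ∀ a b z : EisMod 2, a ≠ 0 → b ≠ 0 → z ^ 2 + a * z = b ^ 2 →
    (z = ⟨0, 1⟩ * a ∨ -a - z = ⟨0, 1⟩ * a) ∧ b ^ 2 = a ^ 2 := by decide +kernel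

theorem dec_A2 : ∀ a z : EisMod 2, z ^ 2 + a * z = 0 → z = 0 ∨ -a - z = 0 := by decide +kernel

theorem dec_A3 : ∀ a b s : EisMod 2, b ^ 2 = a ^ 2 → s ^ 2 = ⟨0, 1⟩ * a ^ 2 →
    b = ⟨0, 1⟩ * s := by decide +kernel

/-- For `b ≡ ω` modulo `2`, none of the four square classes `±1`, `±√-3` of `A` is possible modulo
`8` on the curve with `e = 3` and `f = √-3`. -/
theorem dec_A4 : ∀ b d : EisMod 8, 4 * b = 4 * ⟨0, 1⟩ →
    d ^ 2 ≠ (1 + 3 * b ^ 2) * (1 + (1 + 2 * ⟨0, 1⟩) * b ^ 2) ∧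
    d ^ 2 ≠ -((-1 + 3 * b ^ 2) * (-1 + (1 + 2 * ⟨0, 1⟩) * b ^ 2)) ∧
    d ^ 2 ≠ (1 + 2 * ⟨0, 1⟩) * (((1 + 2 * ⟨0, 1⟩) + 3 * b ^ 2) *
      ((1 + 2 * ⟨0, 1⟩) + (1 + 2 * ⟨0, 1⟩) * b ^ 2)) ∧
    d ^ 2 ≠ -(1 + 2 * ⟨0, 1⟩) * ((-(1 + 2 * ⟨0, 1⟩) + 3 * b ^ 2) *
      (-(1 + 2 * ⟨0, 1⟩) + (1 + 2 * ⟨0, 1⟩) * b ^ 2)) := by decide +kernel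

theorem dec_unit8 : ∀ s : EisMod 8, 4 * s ≠ 0 → s ^ 12 = 1 := by decide +kernel

/-- `(A : B : C)` is a point of `y² = x (x + e) (x + f)`, with `x = A / B²` and `y = C / B³`. -/
def OnCurve (e f A B C : Eis) : Prop := C ^ 2 = A * (A + e * B ^ 2) * (A + f * B ^ 2)

/-- On a point with `A` odd and even last coordinate `2 B`, `A` is a square. -/
theorem sq_of_onCurve {e f A B C : Eis} (he : e ∣ 12) (hf : f ∣ 12) (hA : ¬ 2 ∣ A) (hB : B ≠ 0)
    (h : OnCurve e f A (2 * B) C) : ∃ a, A = a ^ 2 := by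
  unfold OnCurve at h
  refine sq_of_cls (sq_class hA (mul_ne_zero (by decide) hB) he hf h) hA (C := C) ?_
  rw [red_eq_iff]
  exact ⟨B ^ 2 * (A ^ 2 * (e + f) + 4 * A * e * f * B ^ 2), by rw [h]; push_cast; ring⟩

/-- A point with odd `A` and even `B` is divisible by two: `A`, `A + e B²` and `A + f B²`
are all squares. -/
theorem halve {e f A B C : Eis} (he : e ∣ 12) (hf : f ∣ 12) (hef : f - e ∣ 12) (hA : ¬ 2 ∣ A)
    (hB : B ≠ 0) (h : OnCurve e f A (2 * B) C) :
    ∃ a z y, A = a ^ 2 ∧ z ^ 2 + a * z = e * B ^ 2 ∧ y ^ 2 + a * y = f * B ^ 2 := by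
  obtain ⟨a, ha⟩ := sq_of_onCurve he hf hA hB h
  have hodd : ∀ t, ¬ 2 ∣ A + t * (2 * B) ^ 2 := fun t ht =>
    hA ((dvd_add_left (⟨t * 2 * B ^ 2, by ring⟩ : (2 : Eis) ∣ t * (2 * B) ^ 2)).mp ht)
  -- translating `x` moves another root of the cubic to the origin
  obtain ⟨b, hb⟩ := sq_of_onCurve (e := -e) (f := f - e) (C := C) ((neg_dvd).mpr he) hef (hodd e) hB
    (by unfold OnCurve at h ⊢; rw [h]; ring)
  obtain ⟨c, hc⟩ := sq_of_onCurve (e := -f) (f := e - f) (C := C) ((neg_dvd).mpr hf)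
    (by rw [← neg_sub, neg_dvd]; exact hef) (hodd f) hB (by unfold OnCurve at h ⊢; rw [h]; ring)
  obtain ⟨z, -, hz⟩ := exists_half (a := a) (b := b) (m := e * B ^ 2) (by rw [← hb, ← ha]; ring)
  obtain ⟨y, -, hy⟩ := exists_half (a := a) (b := c) (m := f * B ^ 2) (by rw [← hc, ← ha]; ring)
  exact ⟨a, z, y, ha, hz, hy⟩

/-- The half of a point, for one of the four choices of signs. -/
theorem onCurve_half {e f a z y B : Eis} (hz : z ^ 2 + a * z = e * B ^ 2)
    (hy : y ^ 2 + a * y = f * B ^ 2) :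
    OnCurve e f ((a + z) * (a + y)) B ((a + z) * (a + y) * (a + z + y)) := by
  have h1 : (a + z) * (a + y) + e * B ^ 2 = (a + z) * (a + z + y) := by linear_combination -hz
  have h2 : (a + z) * (a + y) + f * B ^ 2 = (a + y) * (a + z + y) := by linear_combination -hy
  unfold OnCurve
  rw [h1, h2]; ring

theorem odd_mul {a b : Eis} : ¬ 2 ∣ a * b ↔ ¬ 2 ∣ a ∧ ¬ 2 ∣ b := by
  rw [irreducible_two.prime.dvd_mul, not_or]

/-- Either root of `z² + a z = m` may be used. -/
theorem choose_root {a m z : Eis} {P : EisMod 2 → Prop} (hz : z ^ 2 + a * z = m)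
    (h : P (red 2 z) ∨ P (-red 2 a - red 2 z)) : ∃ z, z ^ 2 + a * z = m ∧ P (red 2 z) := by
  rcases h with h | h
  · exact ⟨z, hz, h⟩
  · exact ⟨-a - z, by rw [← hz]; ring, by simpa using h⟩

theorem dvd_A : (3 : Eis) ∣ 12 ∧ th ∣ 12 ∧ th - 3 ∣ 12 :=
  ⟨⟨4, by norm_num⟩, ⟨-4 * th, by linear_combination 4 * th_sq⟩,
    ⟨-3 - th, by linear_combination th_sq⟩⟩

theorem red_th : red 2 th = 1 := by decide

/-- The first curve has no point with `A` and `B` odd and `A ≡ ω B²` modulo `2`: the four square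
classes of `A` all fail modulo `8`. -/
theorem curveA_base {A B C : Eis} (hA : ¬ 2 ∣ A) (hB : ¬ 2 ∣ B)
    (hAB : red 2 A = ⟨0, 1⟩ * red 2 B ^ 2) (h : OnCurve 3 th A B C) : False := by
  have hB0 : B ≠ 0 := by rintro rfl; exact hB (dvd_zero 2)
  unfold OnCurve at h
  obtain ⟨s, hs⟩ := sq_class hA hB0 dvd_A.1 dvd_A.2.1 h
  have key : ∃ ε, A = ε * s ^ 2 ∧ (ε = 1 ∨ ε = -1 ∨ ε = th ∨ ε = -th) := by
    rcases hs with hs | hs | hs | hs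
    · exact ⟨1, by rw [hs]; ring, by simp⟩
    · exact ⟨-1, by rw [hs]; ring, by simp⟩
    · exact ⟨th, by rw [hs], by simp⟩
    · exact ⟨-th, by rw [hs]; ring, by simp⟩
  obtain ⟨ε, hε, hε'⟩ := key
  have hε2 : red 2 ε = 1 := by rcases hε' with h | h | h | h <;> subst h <;> decide
  have hs2 : ¬ 2 ∣ s := fun h' => hA (by rw [hε]; exact (h'.pow two_ne_zero).mul_left _)
  have hs0 : s ≠ 0 := by rintro rfl; exact hs2 (dvd_zero 2)
  have hbs := dec_A3 (red 2 B) (red 2 B) (red 2 s) rfl (by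
    rw [← hAB, hε, map_mul, hε2, map_pow, one_mul])
  have hsC : s ∣ C := by
    refine (IsIntegrallyClosed.pow_dvd_pow_iff two_ne_zero).mp
      ⟨ε * (A + 3 * B ^ 2) * (A + th * B ^ 2), ?_⟩
    rw [h]; nth_rewrite 1 [hε]; ring
  obtain ⟨d, rfl⟩ := hsC
  have hd : d ^ 2 = ε * ((ε * s ^ 2 + 3 * B ^ 2) * (ε * s ^ 2 + th * B ^ 2)) := by
    apply mul_left_cancel₀ (pow_ne_zero 2 hs0)
    rw [← mul_pow, h, hε]; ring
  -- rescale so that `s ≡ 1` modulo `8`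
  have hu := dec_unit8 _ (odd_eight hs2)
  have hd8 := congrArg (red 8) hd
  have hb8 : 4 * (red 8 B * red 8 s ^ 11) = 4 * ⟨0, 1⟩ := by
    have := red_eight (x := B) (y := w * s) (by rw [hbs, map_mul, red_w])
    rw [map_mul, red_w] at this
    linear_combination red 8 s ^ 11 * this + 4 * ⟨0, 1⟩ * hu
  have hdec := dec_A4 _ (red 8 d * red 8 s ^ 22) hb8
  have hd8' : (red 8 d * red 8 s ^ 22) ^ 2 = red 8 ε * ((red 8 ε + 3 * (red 8 B * red 8 s ^ 11) ^ 2)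
      * (red 8 ε + red 8 th * (red 8 B * red 8 s ^ 11) ^ 2)) := by
    have h24 : red 8 s ^ 24 = 1 := by rw [show 24 = 12 * 2 from rfl, pow_mul, hu, one_pow]
    calc _ = (red 8 d ^ 2) * red 8 s ^ 44 := by ring
      _ = red 8 ε * ((red 8 ε * red 8 s ^ 24 + 3 * (red 8 B * red 8 s ^ 11) ^ 2)
      * (red 8 ε * red 8 s ^ 24 + red 8 th * (red 8 B * red 8 s ^ 11) ^ 2)) := by
        rw [← map_pow, hd]
        simp only [map_mul, map_add, map_pow, red_ofNat]
        ring
      _ = _ := by rw [h24, mul_one]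
  have hth : red 8 th = 1 + 2 * ⟨0, 1⟩ := by simp [th, red_w]
  rw [hth] at hd8'
  rcases hε' with h' | h' | h' | h'
  · rw [h', map_one] at hd8'
    exact hdec.1 (by rw [hd8']; ring)
  · rw [h', map_neg, map_one] at hd8'
    exact hdec.2.1 (by rw [hd8']; ring)
  · rw [h', hth] at hd8'
    exact hdec.2.2.1 hd8'
  · rw [h', map_neg, hth] at hd8'
    exact absurd hd8' hdec.2.2.2

/-- The curve `y² = x (x + 3) (x + √-3)` has no point with `A` odd and nonzero even last coordinate.
Halving lowers the exponent of `2`, and the last step lands in `curveA_base`. -/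
theorem curveA (k : ℕ) : ∀ {A B C : Eis}, ¬ 2 ∣ A → ¬ 2 ∣ B →
    ¬ OnCurve 3 th A (2 * (2 ^ k * B)) C := by
  induction k with
  | zero =>
    intro A B C hA hB h
    have hB0 : B ≠ 0 := by rintro rfl; exact hB (dvd_zero 2)
    rw [pow_zero, one_mul] at h
    obtain ⟨a, z, y, ha, hz, hy⟩ := halve dvd_A.1 dvd_A.2.1 dvd_A.2.2 hA hB0 h
    have ha2 : ¬ 2 ∣ a := fun h => hA (by rw [ha]; exact h.pow two_ne_zero)
    have hz2 : red 2 z ^ 2 + red 2 a * red 2 z = red 2 B ^ 2 := by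
      have := congrArg (red 2) hz
      simp only [map_add, map_mul, map_pow, red_ofNat] at this
      rw [this]
      exact one_mul (red 2 B ^ 2)
    have hy2 : red 2 y ^ 2 + red 2 a * red 2 y = red 2 B ^ 2 := by
      have := congrArg (red 2) hy
      simp only [map_add, map_mul, map_pow, red_th] at this
      rw [this, one_mul]
    have h1 := dec_A1 _ _ _ (odd_iff.mp ha2) (odd_iff.mp hB) hz2
    have h2 := dec_A1 _ _ _ (odd_iff.mp ha2) (odd_iff.mp hB) hy2
    obtain ⟨z, hz, hz'⟩ := choose_root (P := fun t => t = ⟨0, 1⟩ * red 2 a) hz h1.1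
    obtain ⟨y, hy, hy'⟩ := choose_root (P := fun t => t = ⟨0, 1⟩ * red 2 a) hy h2.1
    have hw : red 2 ((a + z) * (a + y)) = ⟨0, 1⟩ * red 2 B ^ 2 := by
      rw [h1.2, map_mul, map_add, map_add, hz', hy']
      generalize red 2 a = a
      revert a; decide
    refine curveA_base ?_ hB hw (onCurve_half hz hy)
    rw [odd_iff, hw]
    have := odd_iff.mp hB
    generalize red 2 B = b at this ⊢
    revert b; decide
  | succ k ih =>
    intro A B C hA hB h
    have hB0 : 2 ^ (k + 1) * B ≠ 0 := by
      refine mul_ne_zero (pow_ne_zero _ (by decide)) ?_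
      rintro rfl; exact hB (dvd_zero 2)
    obtain ⟨a, z, y, ha, hz, hy⟩ := halve dvd_A.1 dvd_A.2.1 dvd_A.2.2 hA hB0 h
    have ha2 : ¬ 2 ∣ a := fun h => hA (by rw [ha]; exact h.pow two_ne_zero)
    have hB2 : red 2 (2 ^ (k + 1) * B) = 0 := by
      rw [red_eq_zero]; exact ⟨2 ^ k * B, by push_cast; ring⟩
    have key : ∀ {e z}, z ^ 2 + a * z = e * (2 ^ (k + 1) * B) ^ 2 →
        ∃ z, z ^ 2 + a * z = e * (2 ^ (k + 1) * B) ^ 2 ∧ red 2 z = 0 := fun {e z} hz => by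
      refine choose_root (P := (· = 0)) hz (dec_A2 _ _ ?_)
      rw [← map_pow, ← map_mul, ← map_add, hz, map_mul, map_pow, hB2]; simp
    obtain ⟨z, hz, hz'⟩ := key hz
    obtain ⟨y, hy, hy'⟩ := key hy
    have h' := onCurve_half hz hy
    rw [pow_succ', mul_assoc] at h'
    refine ih ?_ hB h'
    rw [odd_iff] at ha2 ⊢
    rw [map_mul, map_add, map_add, hz', hy', add_zero]
    generalize red 2 a = a at ha2 ⊢
    revert a; decide

/-! ### The curve `y² = x (x - 6) (x - 2√-3)` -/

/-- `(A : B : C)` is a point of `y² = x (x - 6) (x - 2√-3)`. -/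
abbrev CurveB (A B C : Eis) : Prop := OnCurve (-6) (-2 * th) A B C

/-- The differences of the roots of the second curve divide `12`, as the descent requires. -/
theorem dvd_B : (-6 : Eis) ∣ 12 ∧ -2 * th ∣ 12 ∧ -2 * th - -6 ∣ 12 :=
  ⟨⟨-2, by norm_num⟩, ⟨2 * th, by linear_combination 4 * th_sq⟩,
    ⟨2 + w, by unfold th; linear_combination 4 * w_sq⟩⟩

theorem dec_sq : ∀ x : EisMod 2, x ≠ 0 → x ^ 2 ≠ 0 := by decide +kernel

theorem dec_B1 : ∀ e s b : EisMod 2, s ≠ 0 → b ≠ 0 →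
    e ^ 2 + s ^ 2 * e = -(2 + ⟨0, 1⟩) * s ^ 2 * b ^ 2 + 3 * 1 * b ^ 4 →
    b ^ 2 = ⟨0, 1⟩ * s ^ 2 := by decide +kernel

/-- On the second curve `A` is a square even if `B` is odd, because `e` and `f` are even and
`e + f ≡ 0` modulo `4`. -/
theorem curveB_sq {A B C : Eis} (hA : ¬ 2 ∣ A) (hB : B ≠ 0) (h : CurveB A B C) :
    ∃ s, A = s ^ 2 := by
  refine sq_of_cls (sq_class hA hB dvd_B.1 dvd_B.2.1 h) hA (C := C) ?_
  unfold CurveB OnCurve at h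
  rw [red_eq_iff, h]
  exact ⟨A * B ^ 2 * (-(2 + w) * A + 3 * th * B ^ 2), by unfold th; push_cast; ring⟩

/-- A point of the second curve with `A` and `B` odd satisfies `B² ≡ ω A` modulo `2`. -/
theorem curveB_odd {A B C : Eis} (hA : ¬ 2 ∣ A) (hB : ¬ 2 ∣ B) (h : CurveB A B C) :
    red 2 B ^ 2 = ⟨0, 1⟩ * red 2 A := by
  have hB0 : B ≠ 0 := by rintro rfl; exact hB (dvd_zero 2)
  obtain ⟨s, rfl⟩ := curveB_sq hA hB0 h
  have hs : ¬ 2 ∣ s := fun h => hA (h.pow two_ne_zero)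
  have hs0 : s ≠ 0 := by rintro rfl; exact hs (dvd_zero 2)
  unfold CurveB OnCurve at h
  obtain ⟨d, rfl⟩ : s ∣ C := (IsIntegrallyClosed.pow_dvd_pow_iff two_ne_zero).mp
    ⟨(s ^ 2 + -6 * B ^ 2) * (s ^ 2 + -2 * th * B ^ 2), by rw [h]; ring⟩
  have hd : d ^ 2 = (s ^ 2) ^ 2 + 4 * (-(2 + w) * s ^ 2 * B ^ 2 + 3 * th * B ^ 4) := by
    apply mul_left_cancel₀ (pow_ne_zero 2 hs0)
    rw [← mul_pow, h]; unfold th; ring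
  obtain ⟨e, -, he⟩ := exists_half hd
  have he2 := congrArg (red 2) he
  simp only [map_add, map_mul, map_pow, map_neg, red_ofNat, red_th, red_w] at he2
  rw [map_pow]
  exact dec_B1 _ _ _ (odd_iff.mp hs) (odd_iff.mp hB) he2

/-- `halve` on the second curve. Since `e` and `f` are even, the roots `z` and `y` may be chosen even,
and are written `2 b` and `2 c`. -/
theorem curveB_half {A B C : Eis} (hA : ¬ 2 ∣ A) (hB : B ≠ 0) (h : CurveB A (2 * B) C) :
    ∃ a b c D, A = a ^ 2 ∧ 2 * b ^ 2 + a * b = -3 * B ^ 2 ∧ 2 * c ^ 2 + a * c = -th * B ^ 2 ∧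
      CurveB ((a + 2 * b) * (a + 2 * c)) B D := by
  obtain ⟨a, z, y, ha, hz, hy⟩ := halve dvd_B.1 dvd_B.2.1 dvd_B.2.2 hA hB h
  have key : ∀ {e z}, z ^ 2 + a * z = -2 * e * B ^ 2 →
      ∃ z, (2 * z) ^ 2 + a * (2 * z) = -2 * e * B ^ 2 := fun {e z} hz => by
    obtain ⟨z, hz, hz'⟩ := choose_root (P := (· = 0)) hz (dec_A2 _ _ (by
      rw [← map_pow, ← map_mul, ← map_add, hz, red_eq_zero]
      exact ⟨-e * B ^ 2, by push_cast; ring⟩))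
    obtain ⟨t, rfl⟩ := red_eq_zero.mp hz'
    exact ⟨t, by rw [← hz]; push_cast; ring⟩
  obtain ⟨b, hb⟩ := key (e := 3) (z := z) (by rw [hz]; ring)
  obtain ⟨c, hc⟩ := key (e := th) (z := y) (by rw [hy])
  refine ⟨a, b, c, _, ha, mul_left_cancel₀ (by decide : (2 : Eis) ≠ 0) ?_,
    mul_left_cancel₀ (by decide : (2 : Eis) ≠ 0) ?_,
    onCurve_half (e := -6) (f := -2 * th) (by rw [hb]; ring) (by rw [hc])⟩
  · linear_combination hb
  · linear_combination hc

/-- The relation between the slope `g / (2 E B)` of the chord through `(-3ω², -3√-3)` and the point,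
obtained by subtracting the equations of the curve at the two points and dividing by the difference
of the abscissas. -/
theorem chord_rel {A B C E g : Eis} (h : CurveB A B C) (hA : A = 4 * E + 3 * (1 + w) * B ^ 2)
    (hC : C = 2 * g - 3 * th * B ^ 3) :
    g ^ 2 - 3 * th * g * B ^ 3 = E * (A ^ 2 - (5 + w) * A * B ^ 2 + 9 * w * B ^ 4) := by
  unfold CurveB OnCurve at h
  apply mul_left_cancel₀ (by decide : (4 : Eis) ≠ 0)
  subst hA hC
  unfold th at *
  linear_combination h - (12 * E * B ^ 4 + 9 * B ^ 6 * w + 18 * B ^ 6) * w_sq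

/-- The sum of a point with the point `(-3ω², -3√-3)`, up to sign. -/
theorem chord {A B C E g : Eis} (h : CurveB A B C) (hA : A = 4 * E + 3 * (1 + w) * B ^ 2)
    (hC : C = 2 * g - 3 * th * B ^ 3) :
    CurveB (g ^ 2 + 4 * E ^ 2 * ((5 + w) * B ^ 2 - A)) (2 * (E * B))
      (8 * E ^ 3 * C + g * (g ^ 2 + 4 * E ^ 2 * ((5 + w) * B ^ 2 - A) - 4 * E ^ 2 * A)) := by
  have hr := chord_rel h hA hC
  unfold CurveB OnCurve
  subst hA hC
  unfold th at *
  linear_combination (-256 * E ^ 6 - 320 * E ^ 5 * B ^ 2 * w - 64 * E ^ 5 * B ^ 2 +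
    16 * E ^ 3 * g ^ 2) * hr + (-768 * E ^ 7 * B ^ 4 - 384 * E ^ 6 * B ^ 6 * w +
    960 * E ^ 6 * B ^ 6 + 48 * E ^ 4 * g ^ 2 * B ^ 4) * w_sq

theorem dec_B2 : ∀ s b c : EisMod 2, s ≠ 0 → b ^ 2 = ⟨0, 1⟩ * s ^ 2 →
    c ^ 2 = s ^ 2 * (s ^ 2 + -6 * b ^ 2) * (s ^ 2 + -2 * 1 * b ^ 2) → c = b ^ 3 := by decide +kernel

theorem dec_B3 : ∀ s b g : EisMod 2, s ≠ 0 → b ^ 2 = ⟨0, 1⟩ * s ^ 2 →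
    g ^ 2 - 3 * 1 * g * b ^ 3 = s ^ 2 * ((s ^ 2) ^ 2 - (5 + ⟨0, 1⟩) * s ^ 2 * b ^ 2 +
      9 * ⟨0, 1⟩ * b ^ 4) → g ≠ 0 ∧ (s ^ 2 * b) ^ 2 ≠ ⟨0, 1⟩ * g ^ 2 := by decide +kernel

set_option synthInstance.maxHeartbeats 200000 in
set_option synthInstance.maxSize 1000 in
/-- The parity which makes the first coordinate of a half congruent to that of the point modulo `8`,
for a point whose last coordinate is `2 B`. -/
theorem dec_B4 : ∀ a b c B : EisMod 2, a ≠ 0 → (B = 0 ∨ B ^ 2 = ⟨0, 1⟩ * a ^ 2) →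
    2 * b ^ 2 + a * b = -3 * B ^ 2 → 2 * c ^ 2 + a * c = -1 * B ^ 2 →
    2 * B ^ 2 + ⟨0, 1⟩ * B ^ 2 + b ^ 2 + c ^ 2 - b * c = 0 := by decide +kernel

/-- No point of the curve with `A` odd and `B = 2ᵏ B₀`, `B₀` odd, satisfies
`B₀² ≡ ω A` modulo `8`. -/
theorem curveB (k : ℕ) : ∀ {A B C : Eis}, ¬ 2 ∣ A → ¬ 2 ∣ B → 8 ∣ B ^ 2 - w * A →
    ¬ CurveB A (2 ^ k * B) C := by
  induction k with
  | zero =>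
    rintro A B C hA hB ⟨t, ht⟩ h
    rw [pow_zero, one_mul] at h
    have hB0 : B ≠ 0 := by rintro rfl; exact hB (dvd_zero 2)
    obtain ⟨s, rfl⟩ := curveB_sq hA hB0 h
    have hs : ¬ 2 ∣ s := fun h => hA (h.pow two_ne_zero)
    have hs2 := odd_iff.mp hs
    have hBs : red 2 B ^ 2 = ⟨0, 1⟩ * red 2 s ^ 2 := by
      rw [← red_w, ← map_pow, ← map_pow, ← map_mul, red_eq_iff]
      exact ⟨4 * t, by rw [ht]; push_cast; ring⟩
    -- `E = (A + 3ω²B²)/4`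
    set E : Eis := s ^ 2 - 6 * (1 + w) * t with hE
    have hAE : s ^ 2 = 4 * E + 3 * (1 + w) * B ^ 2 := by
      rw [hE]; linear_combination (-3 - 3 * w) * ht - 3 * s ^ 2 * w_sq
    have hEs : red 2 E = red 2 s ^ 2 := by
      rw [← map_pow, red_eq_iff]
      exact ⟨-3 * (1 + w) * t, by rw [hE]; push_cast; ring⟩
    have hCB : red 2 C = red 2 B ^ 3 := by
      have hc := congrArg (red 2) h
      simp only [map_add, map_mul, map_pow, map_neg, red_ofNat, red_th] at hc
      exact dec_B2 _ _ _ hs2 hBs hc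
    obtain ⟨g', hg'⟩ : (2 : Eis) ∣ C - B ^ 3 := by
      rw [← map_pow, red_eq_iff] at hCB; exact hCB
    set g : Eis := g' + (2 + 3 * w) * B ^ 3 with hg
    have hCg : C = 2 * g - 3 * th * B ^ 3 := by
      rw [hg]; unfold th; linear_combination hg'
    have hr := congrArg (red 2) (chord_rel h hAE hCg)
    simp only [map_add, map_sub, map_mul, map_pow, red_ofNat, red_th, red_w, hEs] at hr
    obtain ⟨hg0, hne⟩ := dec_B3 _ _ _ hs2 hBs hr
    have hE2 : ¬ 2 ∣ E := by
      rw [odd_iff, hEs]; exact dec_sq _ hs2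
    have h3 := chord h hAE hCg
    have hA3 : red 2 (g ^ 2 + 4 * E ^ 2 * ((5 + w) * B ^ 2 - s ^ 2)) = red 2 g ^ 2 := by
      rw [← map_pow, red_eq_iff]
      exact ⟨2 * E ^ 2 * ((5 + w) * B ^ 2 - s ^ 2), by push_cast; ring⟩
    have hEB : ¬ 2 ∣ E * B := odd_mul.mpr ⟨hE2, hB⟩
    obtain ⟨a, b, c, D, ha, hb, hc, h4⟩ := curveB_half (by rw [odd_iff, hA3]; exact dec_sq _ hg0)
      (by rintro h; exact hEB (h ▸ dvd_zero 2)) h3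
    have hA4 : red 2 ((a + 2 * b) * (a + 2 * c)) = red 2 g ^ 2 := by
      rw [← hA3, ha, red_eq_iff]
      exact ⟨a * c + a * b + 2 * b * c, by push_cast; ring⟩
    have h5 := curveB_odd (by rw [odd_iff, hA4]; exact dec_sq _ hg0) hEB h4
    rw [hA4, map_mul, hEs] at h5
    exact hne h5
  | succ k ih =>
    rintro A B C hA hB ⟨t, ht⟩ h
    have hB0 : 2 ^ k * B ≠ 0 := by
      refine mul_ne_zero (pow_ne_zero _ (by decide)) ?_
      rintro rfl; exact hB (dvd_zero 2)
    rw [pow_succ', mul_assoc] at h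
    obtain ⟨a, b, c, D, ha, hb, hc, h4⟩ := curveB_half hA hB0 h
    have ha2 : ¬ 2 ∣ a := fun h => hA (by rw [ha]; exact h.pow two_ne_zero)
    -- the first coordinate `(a + 2b) (a + 2c)` of the half is `A` modulo `8`
    obtain ⟨u, hu⟩ : (2 : Eis) ∣ 2 * (2 ^ k * B) ^ 2 + w * (2 ^ k * B) ^ 2 + b ^ 2 + c ^ 2 - b * c := by
      have hB2 : red 2 (2 ^ k * B) = 0 ∨ red 2 (2 ^ k * B) ^ 2 = ⟨0, 1⟩ * red 2 a ^ 2 := by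
        rcases k with _ | k
        · right
          rw [← red_w, ← map_pow, ← map_pow, ← map_mul, red_eq_iff]
          exact ⟨4 * t, by rw [← ha]; push_cast; linear_combination ht⟩
        · left
          rw [red_eq_zero]; exact ⟨2 ^ k * B, by push_cast; ring⟩
      have hb2 := congrArg (red 2) hb
      have hc2 := congrArg (red 2) hc
      simp only [map_add, map_mul _ _ (_ ^ 2), map_mul _ a _, map_pow _ _ 2, map_neg, red_ofNat,
        red_th] at hb2 hc2
      have := dec_B4 _ _ _ _ (odd_iff.mp ha2) hB2 hb2 hc2
      rw [← Nat.cast_ofNat (n := 2), ← red_eq_zero]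
      simp only [map_add, map_sub, map_mul _ _ (_ ^ 2), map_mul _ b c, map_pow _ _ 2, red_w]
      exact this
    have hA' : (a + 2 * b) * (a + 2 * c) = A - 8 * u := by
      rw [ha]
      unfold th at hc
      linear_combination 2 * hb + 2 * hc - 4 * hu
    refine ih ?_ hB ?_ h4
    · rw [hA', show (8 : Eis) * u = 2 * (4 * u) by ring]
      exact fun h => hA ((dvd_sub_left ⟨4 * u, rfl⟩).mp h)
    · exact ⟨t + w * u, by rw [hA']; linear_combination ht⟩

/-! ### Solutions with `p` and `q` both odd -/

theorem odd_intCast {n : ℤ} (hn : Odd n) : ¬ (2 : Eis) ∣ n := by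
  obtain ⟨m, rfl⟩ := hn
  intro h
  have h1 : (2 : Eis) ∣ 1 := by
    have : (2 : Eis) ∣ ((2 * m + 1 : ℤ) : Eis) - 2 * m := dvd_sub h ⟨m, rfl⟩
    push_cast at this
    simpa using this
  exact irreducible_two.not_isUnit (isUnit_of_dvd_one h1)

/-- Changing the sign of an odd integer makes it congruent to a given one modulo `4`. -/
theorem exists_sign {M N : ℤ} (hM : Odd M) (hN : Odd N) : ∃ m, (N + 4 * m) ^ 2 = M ^ 2 := by
  rcases (by rw [Int.odd_iff] at hM hN; omega : (4 : ℤ) ∣ M - N ∨ (4 : ℤ) ∣ -M - N) with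
    ⟨m, hm⟩ | ⟨m, hm⟩
  · exact ⟨m, by rw [← hm]; ring⟩
  · exact ⟨m, by rw [← hm]; ring⟩

/-- The sum of the point with abscissa `-2 (N² + 8j) / N²` and the point `(-2, -8ω)`, with `j = 4 k`.
The chord has slope `-H / (N j)`; the hypothesis is the equation of the curve for the first point,
whose ordinate is `8 (2H - ω N³) / N³`. -/
theorem caseB_point {H N k : Eis}
    (hr : H ^ 2 - w * H * N ^ 3 = 2 * k * (N ^ 4 * (5 * w ^ 2 - 2) +
      N ^ 2 * (4 * k) * (8 * w ^ 2 - 20) - 32 * (4 * k) ^ 2)) :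
    ∃ C, CurveB (H ^ 2 + (4 * k) ^ 2 * ((10 + 4 * w) * N ^ 2 + 2 * (N ^ 2 + 8 * (4 * k))))
      (N * (4 * k)) C := by
  refine ⟨8 * (2 * H - w * N ^ 3) * (4 * k) ^ 3 - H * (H ^ 2 + (4 * k) ^ 2 * ((10 + 4 * w) * N ^ 2 +
    2 * (N ^ 2 + 8 * (4 * k))) + 2 * (N ^ 2 + 8 * (4 * k)) * (4 * k) ^ 2), ?_⟩
  unfold CurveB OnCurve th
  linear_combination (-1024 * H ^ 2 * k ^ 3 - 65536 * N ^ 2 * k ^ 5 * w - 229376 * N ^ 2 * k ^ 5 -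
    1048576 * k ^ 6) * hr + (-10240 * H ^ 2 * N ^ 4 * k ^ 4 - 65536 * H ^ 2 * N ^ 2 * k ^ 5 -
    655360 * N ^ 6 * k ^ 6 * w - 2031616 * N ^ 6 * k ^ 6 - 4194304 * N ^ 4 * k ^ 7 * w -
    25165824 * N ^ 4 * k ^ 7 - 67108864 * N ^ 2 * k ^ 8) * w_sq

theorem dec_B5 : ∀ d n k : EisMod 2, n = 1 → (k = 0 ∨ k = 1) →
    d * (⟨0, 1⟩ * n ^ 3 + 2 * d) = k * (n ^ 4 * (5 * ⟨0, 1⟩ ^ 2 - 2) +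
      n ^ 2 * (4 * k) * (8 * ⟨0, 1⟩ ^ 2 - 20) - 32 * (4 * k) ^ 2) →
    d ^ 2 + ⟨0, 1⟩ * n ^ 3 * d = 0 := by decide +kernel

theorem red_odd {n : ℤ} (hn : Odd n) : red 2 n = 1 := by
  obtain ⟨m, rfl⟩ := hn
  rw [← map_one (red 2), red_eq_iff]
  exact ⟨m, by push_cast; ring⟩

/-- If `M² + 3N²` is a square and `M² + √-3 N²` is `-2` times a square, `M` and `N` odd, then
`M² = N²`. Otherwise the point with abscissa `-2M² / N²`, translated by `(-2, -8ω)`, contradicts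
`curveB`. -/
theorem caseB {M N V : ℤ} {W : Eis} (hM : Odd M) (hN : Odd N) (h1 : 4 * V ^ 2 = M ^ 2 + 3 * N ^ 2)
    (h2 : (M : Eis) ^ 2 + th * N ^ 2 = -2 * W ^ 2) : M ^ 2 = N ^ 2 := by
  by_contra hMN
  have hN2 : ¬ (2 : Eis) ∣ N := odd_intCast hN
  -- `M² = N² + 8 j` with `4 ∣ j`
  obtain ⟨m, hm⟩ := exists_sign hM hN
  obtain ⟨j, hj⟩ : ∃ j, M ^ 2 = N ^ 2 + 8 * j := ⟨m * N + 2 * m ^ 2, by rw [← hm]; ring⟩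
  have hV2 : V ^ 2 = N ^ 2 + 2 * j := by linarith
  have hV : Odd V := by
    rw [← Int.odd_pow' two_ne_zero, hV2]
    exact (hN.pow).add_even ⟨j, by ring⟩
  obtain ⟨v, hv⟩ := exists_sign hV hN
  obtain ⟨k, rfl⟩ : (4 : ℤ) ∣ j := ⟨v * N + 2 * v ^ 2, by rw [hV2] at hv; linarith⟩
  have hM' : ((N : Eis) + 4 * m) ^ 2 = N ^ 2 + 8 * (4 * k) := by rw [hj] at hm; exact_mod_cast hm
  have hV' : ((N : Eis) + 4 * v) ^ 2 = N ^ 2 + 2 * (4 * k) := by rw [hV2] at hv; exact_mod_cast hv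
  have hW : W ^ 2 = (w * N) ^ 2 + 4 * (-(4 * k)) := by
    have h3 : (M : Eis) ^ 2 = N ^ 2 + 8 * (4 * k) := by exact_mod_cast hj
    apply mul_left_cancel₀ (by decide : (-2 : Eis) ≠ 0)
    rw [← h2, h3]; unfold th
    linear_combination 2 * (N : Eis) ^ 2 * w_sq
  -- the sign of `W` is chosen so that `W ≡ ω N` modulo `4`
  obtain ⟨z, -, hz⟩ := exists_half hW
  obtain ⟨z, hz, hz'⟩ := choose_root (P := (· = 0)) hz (dec_A2 _ _ (by
    rw [← map_pow, ← map_mul, ← map_add, hz, red_eq_zero]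
    exact ⟨-2 * k, by push_cast; ring⟩))
  obtain ⟨z, rfl⟩ := red_eq_zero.mp hz'
  push_cast at hz
  -- `D = (M V W - ω N³) / 4`
  obtain ⟨D, hD⟩ : ∃ D, (N + 4 * m) * (N + 4 * v) * (w * N + 4 * z) = w * N ^ 3 + 4 * D :=
    ⟨w * N ^ 2 * v + m * w * N ^ 2 + 4 * m * v * w * N + (N + 4 * m) * (N + 4 * v) * z, by ring⟩
  have hDH : D * (w * N ^ 3 + 2 * D) = k * (N ^ 4 * (5 * w ^ 2 - 2) +
      N ^ 2 * (4 * k) * (8 * w ^ 2 - 20) - 32 * (4 * k) ^ 2) := by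
    have h5 := congrArg (· ^ 2) hD
    simp only [mul_pow, hM', hV'] at h5
    have h6 : (w * N + 4 * z) ^ 2 = w ^ 2 * N ^ 2 - 16 * k := by linear_combination 4 * hz
    rw [h6] at h5
    apply mul_left_cancel₀ (by decide : (8 : Eis) ≠ 0)
    linear_combination -h5
  set H : Eis := w * N ^ 3 + 2 * D with hH
  have hpar : red 2 (D ^ 2 + w * N ^ 3 * D) = 0 := by
    have h7 := congrArg (red 2) hDH
    simp only [hH, map_add, map_sub, map_mul, map_pow, red_ofNat, red_w] at h7 ⊢
    refine dec_B5 _ _ _ (red_odd hN) ?_ h7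
    rcases Int.even_or_odd k with ⟨t, ht⟩ | hk
    · left; rw [red_eq_zero]; exact ⟨t, by rw [ht]; push_cast; ring⟩
    · right; exact red_odd hk
  obtain ⟨c, hc⟩ := red_eq_zero.mp hpar
  push_cast at hc
  -- a point `A = H² + …`, `B = N j`, to which the descent applies
  obtain ⟨C, hC⟩ := caseB_point (H := H) (N := N) (k := k) (by rw [hH]; linear_combination 2 * hDH)
  have hk0 : 4 * k ≠ 0 := by rintro h; exact hMN (by rw [hj, h]; ring)
  obtain ⟨j0, hj0, hj0'⟩ :=
    (FiniteMultiplicity.of_not_isUnit Int.prime_two.not_isUnit hk0).exists_eq_pow_mul_and_not_dvd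
  generalize multiplicity 2 (4 * k) = e at hj0
  have hj0o : Odd j0 := by rw [← Int.not_even_iff_odd, even_iff_two_dvd]; exact hj0'
  have hB : (N : Eis) * (4 * k) = 2 ^ e * ((N * j0 : ℤ) : Eis) := by
    have : (4 * k : Eis) = 2 ^ e * j0 := by exact_mod_cast hj0
    rw [this]; push_cast; ring
  rw [hB] at hC
  obtain ⟨b, hb⟩ := Int.eight_dvd_sq_sub_one_of_odd (hN.mul hj0o)
  obtain ⟨n, hn⟩ := Int.eight_dvd_sq_sub_one_of_odd (hN.pow (n := 3))
  have hb' : ((N * j0 : ℤ) : Eis) ^ 2 - 1 = 8 * b := by exact_mod_cast hb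
  have hn' : ((N : Eis) ^ 3) ^ 2 - 1 = 8 * n := by exact_mod_cast hn
  have hHo : ¬ 2 ∣ H := by
    rw [odd_iff, hH, map_add, map_mul, map_mul, map_pow, red_odd hN, red_w]
    generalize red 2 D = d
    revert d; decide
  refine curveB e ?_ (odd_intCast (hN.mul hj0o)) ?_ hC
  · rw [show H ^ 2 + (4 * (k : Eis)) ^ 2 * ((10 + 4 * w) * N ^ 2 + 2 * (N ^ 2 + 8 * (4 * k))) =
      H ^ 2 + 2 * (8 * k ^ 2 * ((10 + 4 * w) * N ^ 2 + 2 * (N ^ 2 + 8 * (4 * k)))) by ring]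
    intro h
    exact hHo (irreducible_two.prime.dvd_of_dvd_pow ((dvd_add_left ⟨_, rfl⟩).mp h))
  · refine ⟨b - n - w * c - 2 * w * k ^ 2 * ((10 + 4 * w) * N ^ 2 + 2 * (N ^ 2 + 8 * (4 * k))), ?_⟩
    rw [hH]
    linear_combination hb' - hn' - 4 * w * hc - (w - 1) * (N : Eis) ^ 6 * w_sq

/-! ### The case in which `p² + 3q²` and `p⁴ + 3q⁴` are squares -/

theorem dvd_of_th_dvd {n : ℤ} (h : th ∣ (n : Eis)) : 3 ∣ n := by
  obtain ⟨t, ht⟩ := h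
  have h1 := congrArg QuadraticAlgebra.norm ht
  rw [map_mul, norm_eq, show QuadraticAlgebra.norm th = 3 by decide] at h1
  simp only [QuadraticAlgebra.re_intCast, QuadraticAlgebra.im_intCast, Int.cast_id] at h1
  exact Int.prime_three.dvd_of_dvd_pow (n := 2) ⟨_, by rw [← h1]; ring⟩

/-- Here `u` and `v` are `p² ± √-3 q²`, or their halves. -/
theorem coprime_conj {u v c P Q : Eis} (h1 : u + v = c * P) (h2 : u - v = c * (th * Q))
    (hPQ : IsCoprime P Q) (hc : IsCoprime u (c * th)) : IsCoprime u v := by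
  obtain ⟨x, y, hxy⟩ := hPQ
  obtain ⟨a, b, hab⟩ := hc
  refine ⟨a + b * (th * x + y), b * (th * x - y), ?_⟩
  linear_combination hab + b * c * th * hxy + b * th * x * h1 + b * y * h2

theorem sq_of_coprime {u v b : Eis} (h : IsCoprime u v) (huv : u * v = b ^ 2) :
    ∃ W, u = W ^ 2 ∨ u = -W ^ 2 := by
  obtain ⟨s, e, he⟩ := exists_associated_pow_of_mul_eq_pow' h huv
  obtain ⟨x, hx | hx⟩ := unit_sq e.isUnit
  · exact ⟨s * x, Or.inl (by rw [← he, hx]; ring)⟩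
  · exact ⟨s * x, Or.inr (by rw [← he, hx]; ring)⟩

/-- Neither `-1` nor `1 + ω` is a square modulo `4`. -/
theorem dec_C : ∀ x : EisMod 4, -x ^ 2 ≠ 1 ∧ x ^ 2 ≠ 1 + ⟨0, 1⟩ := by decide +kernel

/-- The covering with `p² + 3q²` and `p⁴ + 3q⁴` both squares. Factoring the latter over `ℤ[ω]` leads
to `curveA` for even `q` and to `caseB` for odd `q`. -/
theorem caseP {p q a b : ℤ} (hpq : IsCoprime p q) (h3 : ¬ 3 ∣ p) (h1 : p ^ 2 + 3 * q ^ 2 = a ^ 2)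
    (h2 : p ^ 4 + 3 * q ^ 4 = b ^ 2) : q = 0 ∨ p ^ 2 = q ^ 2 := by
  have hPQ : IsCoprime ((p : Eis) ^ 2) ((q : Eis) ^ 2) := (hpq.intCast).pow
  have hb : ((p : Eis) ^ 4 + 3 * q ^ 4) = b ^ 2 := by exact_mod_cast h2
  have hth : ¬ th ∣ (p : Eis) ^ 2 + th * q ^ 2 := fun h => by
    have := (dvd_add_left ⟨_, rfl⟩).mp h
    exact h3 (dvd_of_th_dvd (irreducible_th.prime.dvd_of_dvd_pow this))
  have hp : Odd p := by
    by_contra hp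
    rw [Int.not_odd_iff_even] at hp
    have hq : Odd q := by
      by_contra hq
      rw [Int.not_odd_iff_even] at hq
      exact Int.prime_two.not_isUnit (hpq.isUnit_of_dvd' hp.two_dvd hq.two_dvd)
    obtain ⟨m, rfl⟩ := hp
    obtain ⟨n, rfl⟩ := hq
    rcases Int.even_or_odd' a with ⟨c, rfl | rfl⟩
    · have : 4 * (m ^ 2 + 3 * (n ^ 2 + n) - c ^ 2) = -3 := by linear_combination h1
      omega
    · have : 4 * (m ^ 2 + 3 * (n ^ 2 + n) - (c ^ 2 + c)) = -2 := by linear_combination h1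
      omega
  rcases Int.even_or_odd q with hq | hq
  · left
    by_contra hq0
    obtain ⟨m, hm⟩ := hq.two_dvd
    have hm0 : m ≠ 0 := by rintro rfl; exact hq0 (by simpa using hm)
    have h2u : ¬ 2 ∣ (p : Eis) ^ 2 + th * q ^ 2 := by
      intro h
      refine odd_intCast hp.pow (n := p ^ 2) ?_
      push_cast
      exact (dvd_add_left ⟨th * 2 * m ^ 2, by rw [hm]; push_cast; ring⟩).mp h
    obtain ⟨W, hW⟩ := sq_of_coprime (u := p ^ 2 + th * q ^ 2) (v := p ^ 2 - th * q ^ 2) (b := b)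
      (coprime_conj (c := 2) (by ring) (by ring) hPQ
        (((irreducible_two.coprime_iff_not_dvd.mpr h2u).symm).mul_right
          (irreducible_th.coprime_iff_not_dvd.mpr hth).symm))
      (by linear_combination hb - (q : Eis) ^ 4 * th_sq)
    have hW : (p : Eis) ^ 2 + th * q ^ 2 = W ^ 2 := by
      refine hW.resolve_right fun h => ?_
      obtain ⟨n, rfl⟩ := hp
      refine (dec_C (red 4 W)).1 ?_
      rw [← map_pow, ← map_neg, ← h, ← map_one (red 4), red_eq_iff]
      exact ⟨n ^ 2 + n + th * m ^ 2, by rw [hm]; push_cast; ring⟩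
    obtain ⟨n, hn, hn'⟩ :=
      (FiniteMultiplicity.of_not_isUnit Int.prime_two.not_isUnit hm0).exists_eq_pow_mul_and_not_dvd
    have hno : Odd n := by rw [← Int.not_even_iff_odd, even_iff_two_dvd]; exact hn'
    have hq' : (q : Eis) = 2 * (2 ^ multiplicity 2 m * n) := by
      rw [hm]; nth_rewrite 1 [hn]; push_cast; rfl
    have ha : (p : Eis) ^ 2 + 3 * q ^ 2 = a ^ 2 := by exact_mod_cast h1
    refine curveA (multiplicity 2 m) (A := p ^ 2) (B := n) (C := p * a * W) ?_ (odd_intCast hno) ?_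
    · have := odd_intCast (hp.pow (n := 2)); push_cast at this; exact this
    · unfold OnCurve
      rw [← hq', ha, hW]; ring
  · right
    obtain ⟨m, hm⟩ := Int.eight_dvd_sq_sub_one_of_odd hp
    obtain ⟨n, hn⟩ := Int.eight_dvd_sq_sub_one_of_odd hq
    have hm' : (p : Eis) ^ 2 - 1 = 8 * m := by exact_mod_cast hm
    have hn' : (q : Eis) ^ 2 - 1 = 8 * n := by exact_mod_cast hn
    obtain ⟨b, rfl⟩ : (2 : ℤ) ∣ b := Int.prime_two.dvd_of_dvd_pow
      (⟨32 * m ^ 2 + 8 * m + 96 * n ^ 2 + 24 * n + 2, by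
        rw [← h2]
        linear_combination (p ^ 2 + 1 + 8 * m) * hm + 3 * (q ^ 2 + 1 + 8 * n) * hn⟩ : (2 : ℤ) ∣ b ^ 2)
    obtain ⟨V, rfl⟩ : (2 : ℤ) ∣ a := Int.prime_two.dvd_of_dvd_pow
      (⟨4 * m + 12 * n + 2, by rw [← h1]; linear_combination hm + 3 * hn⟩ : (2 : ℤ) ∣ a ^ 2)
    -- `p² + √-3 q² = 2 F`
    set F : Eis := 1 + 4 * m + 4 * n + w * q ^ 2 with hF
    have hFu : (p : Eis) ^ 2 + th * q ^ 2 = 2 * F := by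
      rw [hF]; unfold th; linear_combination hm' + hn'
    have hthF : ¬ th ∣ F := fun h => hth (hFu ▸ h.mul_left 2)
    obtain ⟨W, hW⟩ := sq_of_coprime (u := F) (v := p ^ 2 - F) (b := b)
      (coprime_conj (c := 1) (P := p ^ 2) (Q := q ^ 2) (by ring) (by linear_combination -hFu) hPQ
        (by rw [one_mul]; exact (irreducible_th.coprime_iff_not_dvd.mpr hthF).symm))
      (by
        apply mul_left_cancel₀ (by decide : (4 : Eis) ≠ 0)
        push_cast at hb
        linear_combination hb - (q : Eis) ^ 4 * th_sq + (2 * F - p ^ 2 + th * q ^ 2) * hFu)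
    have hW : F = -W ^ 2 := by
      refine hW.resolve_left fun h => (dec_C (red 4 W)).2 ?_
      rw [← map_pow, ← h, ← red_w, ← map_one (red 4), ← map_add, red_eq_iff]
      exact ⟨m + n + 2 * w * n, by rw [hF]; push_cast; linear_combination w * hn'⟩
    refine caseB (V := V) (W := W) hp hq (by rw [h1]; ring) ?_
    rw [hFu, hW]; ring

/-! ### The equation `Z⁴ + 27X⁴ = Y²` -/

/-- Coprime positive integers whose product is a `k`-th power are `k`-th powers, `k` even. -/
theorem pow_of_mul {P Q x : ℤ} {k : ℕ} (hk : Even k) (hP : 0 < P) (h : IsCoprime P Q)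
    (hx : P * Q = x ^ k) : ∃ e, P = e ^ k := by
  obtain ⟨e, he⟩ := exists_associated_pow_of_mul_eq_pow' h hx
  refine ⟨e, ?_⟩
  rcases Int.associated_iff.mp he with h | h
  · exact h.symm
  · have := hk.pow_nonneg e
    omega

/-- Coprime positive integers with product `27x⁴`: the factor `27` goes entirely to one of them, and
the cofactors are fourth powers. -/
theorem split27 {P Q x : ℤ} (hP : 0 < P) (hQ : 0 < Q) (h : IsCoprime P Q)
    (hx : P * Q = 27 * x ^ 4) : ∃ e f, x ^ 4 = e ^ 4 * f ^ 4 ∧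
      (P = 27 * e ^ 4 ∧ Q = f ^ 4 ∨ P = f ^ 4 ∧ Q = 27 * e ^ 4) := by
  have key : ∀ {P Q : ℤ}, 0 < P → 0 < Q → IsCoprime P Q → P * Q = 27 * x ^ 4 → ¬ 3 ∣ Q →
      ∃ e f, x ^ 4 = e ^ 4 * f ^ 4 ∧ P = 27 * e ^ 4 ∧ Q = f ^ 4 := by
    intro P Q hP hQ h hx h3
    obtain ⟨P, rfl⟩ : (3 : ℤ) ^ 3 ∣ P :=
      Int.prime_three.pow_dvd_of_dvd_mul_right 3 h3 ⟨x ^ 4, by rw [hx]; norm_num⟩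
    have hx' : P * Q = x ^ 4 := by linarith
    have h' : IsCoprime P Q := h.of_isCoprime_of_dvd_left ⟨3 ^ 3, by ring⟩
    obtain ⟨e, rfl⟩ := pow_of_mul ⟨2, rfl⟩ (by linarith) h' hx'
    obtain ⟨f, rfl⟩ := pow_of_mul ⟨2, rfl⟩ hQ h'.symm (by rw [mul_comm]; exact hx')
    exact ⟨e, f, hx'.symm, by norm_num, rfl⟩
  by_cases h3 : 3 ∣ Q
  · obtain ⟨e, f, h1, h2, h3⟩ := key hQ hP h.symm (by rw [mul_comm]; exact hx) fun h3' =>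
      Int.prime_three.not_isUnit (h.isUnit_of_dvd' h3' h3)
    exact ⟨e, f, h1, Or.inr ⟨h3, h2⟩⟩
  · obtain ⟨e, f, h1, h2, h3⟩ := key hP hQ h hx h3
    exact ⟨e, f, h1, Or.inl ⟨h2, h3⟩⟩

theorem coprime_two {n : ℤ} (hn : Odd n) : IsCoprime n 2 := by
  obtain ⟨m, rfl⟩ := hn
  exact ⟨1, -m, by ring⟩

theorem odd_pow_four {n : ℤ} (hn : Odd n) : n ^ 4 % 16 = 1 := by
  obtain ⟨m, hm⟩ := Int.eight_dvd_sq_sub_one_of_odd hn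
  have : n ^ 4 = 16 * (4 * m ^ 2 + m) + 1 := by linear_combination (n ^ 2 + 1 + 8 * m) * hm
  omega

theorem sq_mod_four (n : ℤ) : n ^ 2 % 4 = 0 ∨ n ^ 2 % 4 = 1 := by
  rcases Int.even_or_odd' n with ⟨m, rfl | rfl⟩
  · left; have : (2 * m) ^ 2 = 4 * m ^ 2 := by ring
    omega
  · right; have : (2 * m + 1) ^ 2 = 4 * (m ^ 2 + m) + 1 := by ring
    omega

theorem pos_of_mul {P Q : ℤ} (h : 0 < P * Q) (h' : 0 ≤ P + Q) : 0 < P ∧ 0 < Q := by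
  rcases pos_and_pos_or_neg_and_neg_of_mul_pos h with h | h
  · exact h
  · omega

/-- Fermat descent on `|X|`. Here `X` is even, say `X = 2x`, and `Y² - Z⁴ = 27X⁴` splits as
`P (P + Z²) = 108x⁴` with coprime factors. This gives `Z² = f⁴ - 108e⁴` with `x = ± e f`, and
splitting `f⁴ - Z²` once more gives `g⁴ + 27h⁴ = f²` with `h` dividing `x`. All other distributions
of the factors are excluded modulo `16`. -/
theorem quartic (n : ℕ) : ∀ {Z X Y : ℤ}, X.natAbs < n → X ≠ 0 → IsCoprime Z (3 * X) →
    Z ^ 4 + 27 * X ^ 4 ≠ Y ^ 2 := by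
  induction n with
  | zero => intro Z X Y h; omega
  | succ n ih =>
    intro Z X Y hn hX hZX hY
    wlog hY0 : 0 ≤ Y generalizing Y
    · exact this (Y := -Y) (by rw [hY]; ring) (by omega)
    have hZ3 : IsCoprime Z 3 := hZX.of_isCoprime_of_dvd_right ⟨X, rfl⟩
    have hZX' : IsCoprime Z X := hZX.of_isCoprime_of_dvd_right ⟨3, by ring⟩
    have hXe : Even X := by
      by_contra hXo
      rw [Int.not_even_iff_odd] at hXo
      have h1 := odd_pow_four hXo
      rcases Int.even_or_odd Z with hZ | hZ
      · obtain ⟨z, rfl⟩ := hZ.two_dvd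
        have h2 : (2 * z) ^ 4 = 16 * z ^ 4 := by ring
        have := sq_mod_four Y
        omega
      · have h2 := odd_pow_four hZ
        have h3 : 2 ∣ Y := Int.prime_two.dvd_of_dvd_pow (n := 2) (by omega)
        obtain ⟨y, rfl⟩ := h3
        have h4 : (2 * y) ^ 2 = 4 * y ^ 2 := by ring
        have := sq_mod_four y
        omega
    obtain ⟨x, rfl⟩ := hXe.two_dvd
    have hx0 : x ≠ 0 := by rintro rfl; exact hX rfl
    have hx4 : 0 < x ^ 4 := by positivity
    have hZo : Odd Z := by
      by_contra hZ
      rw [Int.not_odd_iff_even] at hZ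
      exact Int.prime_two.not_isUnit (hZX'.isUnit_of_dvd' hZ.two_dvd ⟨x, rfl⟩)
    have hZ2 : IsCoprime Z 2 := coprime_two hZo
    have hZ4 := odd_pow_four hZo
    have hZsq : Z ^ 2 % 4 = 1 := by
      have := sq_mod_four Z
      have h := hZo.pow (n := 2)
      rw [Int.odd_iff] at h
      omega
    have hYo : Y % 2 = 1 := by
      have : Y ^ 2 % 2 = 1 := by
        have : (2 * x) ^ 4 = 2 * (8 * x ^ 4) := by ring
        omega
      rw [← Int.odd_iff] at this ⊢
      exact (Int.odd_pow' two_ne_zero).mp this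
    obtain ⟨P, hP⟩ : ∃ P, Y - Z ^ 2 = 2 * P := ⟨(Y - Z ^ 2) / 2, by omega⟩
    have hPQ : P * (P + Z ^ 2) = 108 * x ^ 4 := by
      have : 4 * (P * (P + Z ^ 2)) = 4 * (108 * x ^ 4) := by
        linear_combination (-(Y + Z ^ 2)) * hP - hY - 2 * P * hP
      omega
    have hZx : IsCoprime Z (27 * x ^ 4) := by
      have h27 : IsCoprime Z (3 ^ 3) := hZ3.pow_right
      norm_num at h27
      exact h27.mul_right (hZX'.of_isCoprime_of_dvd_right ⟨2, by ring⟩ : IsCoprime Z x).pow_right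
    have hcop : IsCoprime P (P + Z ^ 2) := by
      have h1 : IsCoprime Z (P * (P + Z ^ 2)) := by
        rw [hPQ, show 108 * x ^ 4 = 2 ^ 2 * (27 * x ^ 4) by ring]
        exact (hZ2.pow_right).mul_right hZx
      have h2 : IsCoprime P (Z ^ 2) := (h1.of_mul_right_left.symm).pow_right
      simpa [add_comm] using h2.add_mul_left_right 1
    obtain ⟨hP0, hQ0⟩ := pos_of_mul (P := P) (Q := P + Z ^ 2) (by rw [hPQ]; positivity) (by linarith)
    rcases Int.even_or_odd P with hPe | hPo
    · have hQo : ¬ 2 ∣ P + Z ^ 2 := by obtain ⟨t, rfl⟩ := hPe; omega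
      obtain ⟨P, rfl⟩ : (2 : ℤ) ^ 2 ∣ P :=
        Int.prime_two.pow_dvd_of_dvd_mul_right 2 hQo ⟨27 * x ^ 4, by rw [hPQ]; ring⟩
      obtain ⟨e, f, hef, ⟨h1, h2⟩ | ⟨h1, h2⟩⟩ := split27 (P := P) (by linarith) hQ0
        (hcop.of_isCoprime_of_dvd_left ⟨2 ^ 2, by ring⟩) (x := x) (by linarith)
      · -- `Z² = f⁴ - 108 e⁴`
        have hex : e ^ 4 ∣ x ^ 4 := ⟨_, hef⟩
        have he0 : e ≠ 0 := by rintro rfl; simp at h1; omega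
        have hfo : f ^ 4 % 2 = 1 := by omega
        have hf2 : f ^ 2 % 2 = 1 := by
          rw [← Int.odd_iff, Int.odd_pow' (by norm_num)] at hfo
          rw [← Int.odd_iff]; exact hfo.pow
        obtain ⟨R, hR⟩ : ∃ R, f ^ 2 - Z = 2 * R := ⟨(f ^ 2 - Z) / 2, by
          rw [Int.odd_iff] at hZo; omega⟩
        have hRS : R * (R + Z) = 27 * e ^ 4 := by
          have : 4 * (R * (R + Z)) = 4 * (27 * e ^ 4) := by
            linear_combination -h2 + 4 * h1 - (f ^ 2 + Z + 2 * R) * hR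
          omega
        have hZe : IsCoprime Z (R * (R + Z)) := by
          rw [hRS]; exact hZx.of_isCoprime_of_dvd_right (mul_dvd_mul_left 27 hex)
        have hcop' : IsCoprime R (R + Z) := by
          simpa [add_comm] using (hZe.of_mul_right_left.symm).add_mul_left_right 1
        obtain ⟨hR0, hS0⟩ := pos_of_mul (P := R) (Q := R + Z) (by rw [hRS]; positivity)
          (by nlinarith [sq_nonneg f])
        obtain ⟨h, g, hgh, hcase⟩ := split27 hR0 hS0 hcop' hRS
        have hdvd : h ∣ x := (Int.pow_dvd_pow_iff (by norm_num : 4 ≠ 0)).mp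
          (dvd_trans (Dvd.intro _ hgh.symm) hex)
        have hh0 : h ≠ 0 := by rintro rfl; apply he0; simpa using hgh
        have hcop3 : IsCoprime (g ^ 4) (27 * h ^ 4) := by
          rcases hcase with ⟨h1, h2⟩ | ⟨h1, h2⟩
          · rw [← h1, ← h2]; exact hcop'.symm
          · rw [← h1, ← h2]; exact hcop'
        refine ih (Z := g) (X := h) (Y := f) ?_ hh0 ?_ ?_
        · have := Int.natAbs_le_of_dvd_ne_zero hdvd hx0
          omega
        · refine (hcop3.of_isCoprime_of_dvd_right ⟨9 * h ^ 3, by ring⟩).of_isCoprime_of_dvd_left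
            ⟨g ^ 3, by ring⟩
        · rcases hcase with ⟨h1, h2⟩ | ⟨h1, h2⟩ <;> linarith
      · have := odd_pow_four (n := e) (by
          by_contra hf
          rw [Int.not_odd_iff_even] at hf
          obtain ⟨t, rfl⟩ := hf.two_dvd
          exact hQo ⟨27 * 8 * t ^ 4, by rw [h2]; ring⟩)
        omega
    · have hQe : Even (P + Z ^ 2) := hPo.add_odd hZo.pow
      have hP2 : ¬ 2 ∣ P := by rw [Int.odd_iff] at hPo; omega
      obtain ⟨Q, hQ⟩ : (2 : ℤ) ^ 2 ∣ P + Z ^ 2 :=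
        Int.prime_two.pow_dvd_of_dvd_mul_left 2 hP2 ⟨27 * x ^ 4, by rw [hPQ]; ring⟩
      rw [hQ] at hcop hPQ hQ0
      obtain ⟨f, e, hef, ⟨h1, h2⟩ | ⟨h1, h2⟩⟩ := split27 (Q := Q) hP0 (by linarith)
        (hcop.of_isCoprime_of_dvd_right ⟨2 ^ 2, by ring⟩) (x := x) (by linarith)
      · -- `Z² = 4 e⁴ - 27 f⁴`
        have hfo : f ^ 4 % 2 = 1 := by omega
        have hRS : (2 * e ^ 2 - Z) * (2 * e ^ 2 + Z) = 27 * f ^ 4 := by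
          linear_combination h1 - hQ - 4 * h2
        have hZf : IsCoprime Z ((2 * e ^ 2 - Z) * (2 * e ^ 2 + Z)) := by
          rw [hRS]; exact hZx.of_isCoprime_of_dvd_right (mul_dvd_mul_left 27 ⟨_, hef⟩)
        have hcop' : IsCoprime (2 * e ^ 2 - Z) (2 * e ^ 2 + Z) := by
          have hR2 : IsCoprime (2 * e ^ 2 - Z) 2 := coprime_two (by
            rw [Int.odd_iff] at hZo ⊢; omega)
          have := (hR2.mul_right hZf.of_mul_right_left.symm).add_mul_left_right 1
          rwa [show 2 * Z + (2 * e ^ 2 - Z) * 1 = 2 * e ^ 2 + Z by ring] at this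
        have hf0 : f ≠ 0 := by rintro rfl; simp at hfo
        obtain ⟨hR0, hS0⟩ := pos_of_mul (P := 2 * e ^ 2 - Z) (Q := 2 * e ^ 2 + Z)
          (by rw [hRS]; positivity) (by nlinarith [sq_nonneg e])
        obtain ⟨h, g, hgh, hcase⟩ := split27 hR0 hS0 hcop' hRS
        have hsum : g ^ 4 + 27 * h ^ 4 = 4 * e ^ 2 := by
          rcases hcase with ⟨h1, h2⟩ | ⟨h1, h2⟩ <;> linarith
        rw [hgh, ← Int.odd_iff, Int.odd_mul, Int.odd_pow' (by norm_num),
          Int.odd_pow' (by norm_num)] at hfo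
        have h3 := odd_pow_four hfo.1
        have h4 := odd_pow_four hfo.2
        have := sq_mod_four e
        omega
      · have := odd_pow_four (n := e) (by
          by_contra hf
          rw [Int.not_odd_iff_even] at hf
          obtain ⟨t, rfl⟩ := hf.two_dvd
          exact hP2 ⟨8 * t ^ 4, by rw [h1]; ring⟩)
        omega

/-! ### Coprime integer solutions -/

/-- If `F G` is a square and `gcd (F, G)` divides `4`, then `F` and `G` are squares, provided that `F`
is odd or divisible by `4`. -/
theorem sq_split {F G Y m n : ℤ} (hF : 0 < F) (hG : 0 < G) (hY : F * G = Y ^ 2)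
    (hFG : G = F * m + 4 * n) (hn : IsCoprime F n) (h4 : Odd F ∨ 4 ∣ F) :
    (∃ a, F = a ^ 2) ∧ ∃ b, G = b ^ 2 := by
  rcases h4 with h | ⟨F, rfl⟩
  · have h4 : IsCoprime F (2 ^ 2) := (coprime_two h).pow_right
    have hc : IsCoprime F G := by
      have := (h4.mul_right hn).add_mul_left_right m
      rwa [show 2 ^ 2 * n + F * m = G by rw [hFG]; ring] at this
    exact ⟨pow_of_mul even_two hF hc hY, pow_of_mul even_two hG hc.symm (by rw [mul_comm]; exact hY)⟩
  · obtain ⟨G, rfl⟩ : 4 ∣ G := ⟨F * m + n, by rw [hFG]; ring⟩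
    have hc : IsCoprime F G := by
      have := (hn.of_isCoprime_of_dvd_left ⟨4, mul_comm _ _⟩ : IsCoprime F n).add_mul_left_right m
      rwa [show n + F * m = G by linarith] at this
    obtain ⟨y, rfl⟩ : 4 ∣ Y :=
      (Int.pow_dvd_pow_iff two_ne_zero).mp ⟨F * G, by rw [← hY]; ring⟩
    have hy : F * G = y ^ 2 := by linarith
    obtain ⟨a, ha⟩ := pow_of_mul even_two (by linarith) hc hy
    obtain ⟨b, hb⟩ := pow_of_mul even_two (by linarith) hc.symm (by rw [mul_comm]; exact hy)
    exact ⟨⟨2 * a, by rw [ha]; ring⟩, ⟨2 * b, by rw [hb]; ring⟩⟩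

/-- The form `p² + 3q²` never takes a value congruent to `2` modulo `4`. -/
theorem odd_or_four_dvd (p q : ℤ) : Odd (p ^ 2 + 3 * q ^ 2) ∨ 4 ∣ p ^ 2 + 3 * q ^ 2 := by
  rw [Int.odd_iff]
  have := sq_mod_four p
  have := sq_mod_four q
  omega

theorem coprime_form {p q : ℤ} (hpq : IsCoprime p q) : IsCoprime (p ^ 2 + 3 * q ^ 2) q := by
  have := (hpq.pow_left (m := 2)).add_mul_right_left (3 * q)
  rwa [show p ^ 2 + 3 * q * q = p ^ 2 + 3 * q ^ 2 by ring] at this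

/-- The two coverings combined: after reduction to lowest terms only `p = 0` and `p = ±q` remain. -/
theorem integral_points {p q Y : ℤ} (hpq : IsCoprime p q) (hq : q ≠ 0)
    (h : (p ^ 2 + 3 * q ^ 2) * (p ^ 4 + 3 * q ^ 4) = Y ^ 2) : p = 0 ∨ p ^ 2 = q ^ 2 := by
  by_cases h3 : 3 ∣ p
  · left
    obtain ⟨t, rfl⟩ := h3
    by_contra ht
    obtain ⟨y, rfl⟩ : 3 ∣ Y := (Int.pow_dvd_pow_iff two_ne_zero).mp
      ⟨(q ^ 2 + 3 * t ^ 2) * (q ^ 4 + 27 * t ^ 4), by rw [← h]; ring⟩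
    have hy : (q ^ 2 + 3 * t ^ 2) * (q ^ 4 + 27 * t ^ 4) = y ^ 2 := by linarith
    have hq3 : IsCoprime (q ^ 2 + 3 * t ^ 2) q := by
      have := (((hpq.symm.of_isCoprime_of_dvd_right ⟨t, rfl⟩).mul_right
        (hpq.symm.of_isCoprime_of_dvd_right ⟨3, by ring⟩)).mul_right
        (hpq.symm.of_isCoprime_of_dvd_right ⟨3, by ring⟩) : IsCoprime q (3 * t * t))
      have := this.symm.add_mul_left_left q
      rwa [show 3 * t * t + q * q = q ^ 2 + 3 * t ^ 2 by ring] at this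
    obtain ⟨-, b, hb⟩ := sq_split (by positivity) (by positivity) hy
      (m := 3 * (q ^ 2 + 3 * t ^ 2) - 6 * q ^ 2) (n := q ^ 4) (by ring) hq3.pow_right
      (odd_or_four_dvd q t)
    refine quartic _ (Nat.lt_succ_self t.natAbs) (fun h0 => ht (by rw [h0]; rfl)) hpq.symm hb
  · right
    have h3' : IsCoprime (p ^ 2 + 3 * q ^ 2) 3 := by
      have := (((Int.prime_three.coprime_iff_not_dvd.mpr h3).symm).pow_left
        (m := 2)).add_mul_left_left (q ^ 2)
      exact this
    obtain ⟨⟨a, ha⟩, b, hb⟩ := sq_split (by positivity) (by positivity) h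
      (m := p ^ 2 + 3 * q ^ 2 - 6 * q ^ 2) (n := 3 * q ^ 4) (by ring)
      (h3'.mul_right (coprime_form hpq).pow_right) (odd_or_four_dvd p q)
    exact (caseP hpq h3 ha hb).resolve_left hq

end GenusTwo

/-- The only rational points on the affine curve `y² = x⁶ + 3x⁴ + 3x² + 9` are
`(1, 4)`, `(1, -4)`, `(-1, 4)`, `(-1, -4)`, `(0, 3)`, and `(0, -3)`. -/
theorem rational_points_of_genus_two_curve_four (x y : ℚ) :
    y ^ 2 = x ^ 6 + 3 * x ^ 4 + 3 * x ^ 2 + 9 ↔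
      (x, y) = (1, 4) ∨ (x, y) = (1, -4) ∨ (x, y) = (-1, 4) ∨ (x, y) = (-1, -4) ∨
        (x, y) = (0, 3) ∨ (x, y) = (0, -3) := by
  simp only [Prod.mk.injEq]
  constructor
  · intro h
    have hd : (x.den : ℚ) ≠ 0 := by exact_mod_cast x.den_ne_zero
    have hx : x * x.den = x.num := Rat.mul_den_eq_num x
    have hY : ((((x.num ^ 2 + 3 * (x.den : ℤ) ^ 2) * (x.num ^ 4 + 3 * (x.den : ℤ) ^ 4) : ℤ)) : ℚ)
        = (y * x.den ^ 3) ^ 2 := by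
      push_cast
      rw [← hx]
      linear_combination -(x.den : ℚ) ^ 6 * h
    obtain ⟨Y, hY⟩ := Rat.isSquare_intCast_iff.mp ⟨_, hY.trans (sq _)⟩
    rcases GenusTwo.integral_points (q := x.den) (Y := Y)
      (Int.isCoprime_iff_gcd_eq_one.mpr x.reduced) (by exact_mod_cast x.den_ne_zero)
      (by rw [hY, sq]) with h0 | h1
    · have hx0 : x = 0 := Rat.num_eq_zero.mp h0
      subst hx0
      have : y = 3 ∨ y = -3 := sq_eq_sq_iff_eq_or_eq_neg.mp (by linarith)
      tauto
    · have hx1 : x = 1 ∨ x = -1 := by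
        refine sq_eq_sq_iff_eq_or_eq_neg.mp ?_
        have : (x.num : ℚ) ^ 2 = x.den ^ 2 := by exact_mod_cast h1
        rw [← hx] at this
        exact mul_right_cancel₀ (pow_ne_zero 2 hd) (by linarith)
      have : y = 4 ∨ y = -4 := sq_eq_sq_iff_eq_or_eq_neg.mp (by
        rcases hx1 with rfl | rfl <;> linarith)
      tauto
  · rintro (⟨rfl, rfl⟩ | ⟨rfl, rfl⟩ | ⟨rfl, rfl⟩ | ⟨rfl, rfl⟩ | ⟨rfl, rfl⟩ | ⟨rfl, rfl⟩) <;> norm_num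
end
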